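/- arXiv:1208.3692 — 3 statements merged into one kernel-verified Lean document; each statement's English description precedes it below -/
import Mathlib

section
/- Let f : ℂ → ℂ be a transcendental entire function. Then the set K(f) of points with bounded orbit is either connected or has infinitely many connected components (i.e. if K(f) is not connected, then the set of connected components of K(f) is infinite). -/
open Filter Topology

/-- The set `K(f)` of points whose orbit under iteration of `f` is bounded. -/
def boundedOrbitSet (f : ℂ → ℂ) : Set ℂ :=
  {z : ℂ | Bornology.IsBounded (Set.range fun n : ℕ => f^[n] z)}

/-- `f` is a transcendental entire function: holomorphic on all of `ℂ` and not a polynomial. -/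
def TranscendentalEntire (f : ℂ → ℂ) : Prop :=
  Differentiable ℂ f ∧ ¬∃ p : Polynomial ℂ, ∀ z, f z = p.eval z

/-!
Call a point of `K(f)` stable if the iterates of `f` are uniformly bounded near it. By Schottky's
theorem, if `p ∈ K(f)` is unstable and `a ≠ b`, then iterates of points `z ≠ p` arbitrarily close to
`p` attain `a` or `b`: Schottky's theorem is applied around the missing point `p` by chaining it
along circles centred at `p`. Taking `a, b ∈ K(f)` shows that `K(f)` has no isolated points.

Suppose `K(f)` has finitely many components. Each of them is then open in `K(f)`. If `K(f) ≠ ℂ`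
there is an unstable point, and since its orbit meets some component twice, an iterate `q` of it is
unstable with `f^N q` in the component of `q`, for some `N ≥ 1`. An arbitrary `x ∈ K(f)` has another
point `y ∈ K(f)` in its component; some iterate of `f^N` sends a point of the component of `q` to
`x` or `y`. As iterates of `f^N` map the component of `q` into itself, it contains `x`.

If `K(f) ≠ ∅, ℂ` had no unstable point, it would be open and have a boundary point `q ∉ K(f)`.
Schottky's theorem near `q` and near `f(q)` makes an iterate `f^n` map a small disc about one of
them over itself. The part of that disc outside `K(f)` is then covered by its own image, so it
contains a whole orbit of `f^n`; but this orbit is bounded, which is absurd.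

Finally `K(f) ≠ ∅`, since `f ∘ f` has a fixed point (Fatou): otherwise the quotient
`(f (f z) - z) / (f z - z)` is constant by Picard's little theorem, a second use of which makes `f`
affine, and an affine map without fixed points is a translation.

Schottky's theorem follows from Bloch's theorem: a function on a disc that omits `0` and `1` has the
form `exp (2πi cosh² H)`, where `H` omits every `v` with `cosh² v ∈ ℤ`; these `v` come within
distance `3` of every point, so `H` has bounded oscillation on the half disc.
-/

open Function Metric Set

/-! ### Bloch's theorem -/

section Bloch

variable {H : ℂ → ℂ} {a c : ℂ} {r R L ε : ℝ}

theorem ball_subset_image_closedBall_of_le_norm_sub (hH : DiffContOnCl ℂ H (ball c r))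
    (hr : 0 < r) (hε : ∀ z ∈ sphere c r, ε ≤ ‖H z - H c‖) :
    ball (H c) (ε / 2) ⊆ H '' closedBall c r := by
  rcases le_or_gt ε 0 with hε₀ | hε₀
  · simp [ball_eq_empty.2 (by linarith : ε / 2 ≤ 0)]
  refine hH.ball_subset_image_closedBall hr hε fun hconst ↦ ?_
  have hball : EqOn H (fun _ ↦ H c) (ball c r) :=
    (hH.differentiableOn.analyticOnNhd isOpen_ball).eqOn_of_preconnected_of_eventuallyEq
      analyticOnNhd_const (convex_ball c r).isPreconnected (mem_ball_self hr)
      (by simpa [EventuallyEq] using hconst)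
  obtain ⟨z, hz⟩ := NormedSpace.sphere_nonempty (x := c).2 hr.le
  have hzc : H z = H c := hball.of_subset_closure hH.continuousOn continuousOn_const
    subset_closure subset_rfl (closure_ball c hr.ne' ▸ sphere_subset_closedBall hz)
  linarith [hε z hz, norm_eq_zero.2 (sub_eq_zero.2 hzc)]

theorem norm_deriv_mul_norm_sub_le_of_norm_deriv_sub_le
    (hH : ∀ z ∈ closedBall a r, DifferentiableAt ℂ H z)
    (hderiv : ∀ z ∈ closedBall a r, ‖deriv H z - deriv H a‖ ≤ ‖deriv H a‖ / 2)
    {z : ℂ} (hz : z ∈ closedBall a r) :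
    ‖deriv H a‖ / 2 * ‖z - a‖ ≤ ‖H z - H a‖ := by
  have hlinear : ‖(H z - deriv H a * z) - (H a - deriv H a * a)‖ ≤ ‖deriv H a‖ / 2 * ‖z - a‖ := by
    refine (convex_closedBall a r).norm_image_sub_le_of_norm_hasDerivWithin_le
      (f := fun z ↦ H z - deriv H a * z) (f' := fun z ↦ deriv H z - deriv H a)
      (fun w hw ↦ ?_) hderiv (mem_closedBall_self (dist_nonneg.trans hz)) hz
    simpa using ((hH w hw).hasDerivAt.fun_sub
      ((hasDerivAt_id w).const_mul (deriv H a))).hasDerivWithinAt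
  have htriangle : ‖deriv H a * (z - a)‖ ≤
      ‖H z - H a‖ + ‖(H z - deriv H a * z) - (H a - deriv H a * a)‖ := by
    have hsplit : deriv H a * (z - a) =
        (H z - H a) - ((H z - deriv H a * z) - (H a - deriv H a * a)) := by ring
    exact hsplit ▸ norm_sub_le _ _
  rw [norm_mul] at htriangle
  linarith

theorem ball_subset_image_ball_of_norm_deriv_le_two_mul (hr : 0 < r)
    (hH : DifferentiableOn ℂ H (ball a r))
    (hderiv : ∀ z ∈ ball a r, ‖deriv H z‖ ≤ 2 * ‖deriv H a‖) :
    ball (H a) (r * ‖deriv H a‖ / 24) ⊆ H '' ball a r := by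
  have hsub : closedBall a (r / 6) ⊆ ball a r := closedBall_subset_ball (by linarith)
  have hmaps : MapsTo (deriv H) (ball a r) (closedBall (deriv H a) (3 * ‖deriv H a‖)) := by
    intro z hz
    rw [mem_closedBall, dist_eq_norm]
    linarith [norm_sub_le (deriv H z) (deriv H a), hderiv z hz]
  have hclose (z : ℂ) (hz : z ∈ closedBall a (r / 6)) :
      ‖deriv H z - deriv H a‖ ≤ ‖deriv H a‖ / 2 := by
    calc ‖deriv H z - deriv H a‖ = dist (deriv H z) (deriv H a) := (dist_eq_norm _ _).symm
      _ ≤ 3 * ‖deriv H a‖ / r * dist z a :=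
        Complex.dist_le_div_mul_dist_of_mapsTo_ball (hH.deriv isOpen_ball) hmaps (hsub hz)
      _ ≤ 3 * ‖deriv H a‖ / r * (r / 6) := by gcongr; exact hz
      _ = ‖deriv H a‖ / 2 := by field_simp; ring
  have hsphere (z : ℂ) (hz : z ∈ sphere a (r / 6)) : r * ‖deriv H a‖ / 12 ≤ ‖H z - H a‖ := by
    have := norm_deriv_mul_norm_sub_le_of_norm_deriv_sub_le
      (fun w hw ↦ hH.differentiableAt (isOpen_ball.mem_nhds (hsub hw))) hclose
      (sphere_subset_closedBall hz)
    rw [mem_sphere_iff_norm.1 hz] at this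
    linarith
  have hcl : DiffContOnCl ℂ H (ball a (r / 6)) :=
    (hH.mono (closure_ball_subset_closedBall.trans hsub)).diffContOnCl
  have hradius : r * ‖deriv H a‖ / 24 = r * ‖deriv H a‖ / 12 / 2 := by ring
  calc ball (H a) (r * ‖deriv H a‖ / 24) = ball (H a) (r * ‖deriv H a‖ / 12 / 2) := by rw [hradius]
    _ ⊆ H '' closedBall a (r / 6) :=
      ball_subset_image_closedBall_of_le_norm_sub hcl (by positivity) hsphere
    _ ⊆ H '' ball a r := image_mono hsub

theorem exists_ball_subset_image_ball (hH : DifferentiableOn ℂ H (ball c R)) :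
    ∃ w, ball w (R * ‖deriv H c‖ / 96) ⊆ H '' ball c R := by
  rcases le_or_gt R 0 with hR | hR
  · refine ⟨0, ?_⟩
    rw [ball_eq_empty.2 (by nlinarith [norm_nonneg (deriv H c)])]
    exact empty_subset _
  have hsub : closedBall c (3 * (R / 4)) ⊆ ball c R := closedBall_subset_ball (by linarith)
  -- The point-picking lemma needs a complete space, hence the closed ball.
  obtain ⟨r, hr, ⟨a, ha⟩, hrR, hac, hderiv, hmax⟩ := hofer
    (⟨c, mem_closedBall_self (by positivity)⟩ : closedBall c (3 * (R / 4))) (R / 4) (by positivity)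
    (ϕ := fun z ↦ ‖deriv H z‖)
    ((hH.deriv isOpen_ball).continuousOn.mono hsub).domRestrict.norm (fun _ ↦ norm_nonneg _)
  have hball : ball a r ⊆ closedBall c (3 * (R / 4)) :=
    ball_subset_closedBall.trans (closedBall_subset_closedBall' (by
      have : dist a c ≤ 2 * (R / 4) := hac
      linarith))
  refine ⟨H a, (ball_subset_ball ?_).trans ((ball_subset_image_ball_of_norm_deriv_le_two_mul hr
    (hH.mono (hball.trans hsub)) fun z hz ↦ ?_).trans (image_mono (hball.trans hsub)))⟩
  · linarith
  · exact hmax ⟨z, hball hz⟩ (by rw [dist_comm]; exact (mem_ball.1 hz).le)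

theorem mul_norm_deriv_le_of_forall_exists_notMem_image (hH : DifferentiableOn ℂ H (ball c R))
    (hL : ∀ w, ∃ v ∉ H '' ball c R, dist v w ≤ L) : R * ‖deriv H c‖ ≤ 96 * L := by
  obtain ⟨w, hw⟩ := exists_ball_subset_image_ball hH
  obtain ⟨v, hv, hvw⟩ := hL w
  have : R * ‖deriv H c‖ / 96 ≤ dist v w := not_lt.1 fun h ↦ hv (hw h)
  linarith

theorem norm_sub_le_of_forall_exists_notMem_image (hH : DifferentiableOn ℂ H (ball c R))
    (hL : ∀ w, ∃ v ∉ H '' ball c R, dist v w ≤ L) {z : ℂ} (hz : z ∈ ball c (R / 2)) :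
    ‖H z - H c‖ ≤ 96 * L := by
  have hR : 0 < R := by linarith [pos_of_mem_ball hz]
  have hsub (w : ℂ) (hw : w ∈ ball c (R / 2)) : ball w (R / 2) ⊆ ball c R :=
    ball_subset_ball' (by linarith [mem_ball.1 hw])
  have hderiv (w : ℂ) (hw : w ∈ ball c (R / 2)) : ‖deriv H w‖ ≤ 192 * L / R := by
    have := mul_norm_deriv_le_of_forall_exists_notMem_image (hH.mono (hsub w hw))
      fun u ↦ (hL u).imp fun v hv ↦ ⟨fun h ↦ hv.1 (image_mono (hsub w hw) h), hv.2⟩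
    rw [le_div_iff₀ hR]
    linarith
  have hcenter : c ∈ ball c (R / 2) := mem_ball_self (by positivity)
  have hmean := (convex_ball c (R / 2)).norm_image_sub_le_of_norm_deriv_le
    (fun w hw ↦ hH.differentiableAt
      (isOpen_ball.mem_nhds (hsub w hw (mem_ball_self (by positivity))))) hderiv hcenter hz
  calc ‖H z - H c‖ ≤ 192 * L / R * ‖z - c‖ := hmean
    _ ≤ 192 * L / R * (R / 2) := by
      gcongr
      · exact (norm_nonneg _).trans (hderiv c hcenter)
      · exact (mem_ball_iff_norm.1 hz).le
    _ = 96 * L := by field_simp; ring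

end Bloch

/-! ### Schottky's theorem and Picard's little theorem -/

section Schottky

variable {F g : ℂ → ℂ} {a b c e : ℂ} {r : ℝ}

theorem exists_exp_eq_of_ne_zero_on_ball (hr : 0 < r) (hg : DifferentiableOn ℂ g (ball c r))
    (h₀ : ∀ z ∈ ball c r, g z ≠ 0) :
    ∃ G : ℂ → ℂ, DifferentiableOn ℂ G (ball c r) ∧
      (∀ z ∈ ball c r, Complex.exp (G z) = g z) ∧ G c = Complex.log (g c) := by
  obtain ⟨P, hP⟩ := ((hg.deriv isOpen_ball).div hg h₀).isExactOn_ball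
  have hc : c ∈ ball c r := mem_ball_self hr
  set G : ℂ → ℂ := fun z ↦ P z - P c + Complex.log (g c) with hG
  have hderivG (z : ℂ) (hz : z ∈ ball c r) : HasDerivAt G (deriv g z / g z) z :=
    ((hP z hz).sub_const _).add_const _
  have hderiv (z : ℂ) (hz : z ∈ ball c r) :
      HasDerivAt (fun z ↦ g z * Complex.exp (-G z)) 0 z := by
    refine ((hg.differentiableAt (isOpen_ball.mem_nhds hz)).hasDerivAt.mul
      (hderivG z hz).fun_neg.cexp).congr_deriv ?_
    field_simp [h₀ z hz]
    ring
  have hGc : G c = Complex.log (g c) := by simp [hG]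
  refine ⟨G, fun z hz ↦ (hderivG z hz).differentiableAt.differentiableWithinAt, fun z hz ↦ ?_, hGc⟩
  have hconst : g z * Complex.exp (-G z) = g c * Complex.exp (-G c) :=
    isOpen_ball.is_const_of_deriv_eq_zero (convex_ball c r).isPreconnected
      (fun w hw ↦ (hderiv w hw).differentiableAt.differentiableWithinAt)
      (fun w hw ↦ (hderiv w hw).deriv) hz hc
  rw [hGc, Complex.exp_neg, Complex.exp_neg, Complex.exp_log (h₀ c hc),
    mul_inv_cancel₀ (h₀ c hc)] at hconst
  exact (mul_inv_eq_one₀ (Complex.exp_ne_zero _)).1 hconst |>.symm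

theorem exists_sq_eq_of_ne_zero_on_ball (hr : 0 < r) (hg : DifferentiableOn ℂ g (ball c r))
    (h₀ : ∀ z ∈ ball c r, g z ≠ 0) :
    ∃ u : ℂ → ℂ, DifferentiableOn ℂ u (ball c r) ∧ ∀ z ∈ ball c r, u z ^ 2 = g z := by
  obtain ⟨G, hG, hexp, -⟩ := exists_exp_eq_of_ne_zero_on_ball hr hg h₀
  refine ⟨fun z ↦ Complex.exp (G z / 2), (hG.div_const 2).cexp, fun z hz ↦ ?_⟩
  rw [← hexp z hz, ← Complex.exp_nat_mul]
  congr 1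
  push_cast
  ring

theorem exists_cosh_sq_eq_of_ne_zero_of_ne_one_on_ball (hr : 0 < r)
    (hF : DifferentiableOn ℂ F (ball c r)) (h₀ : ∀ z ∈ ball c r, F z ≠ 0)
    (h₁ : ∀ z ∈ ball c r, F z ≠ 1) :
    ∃ H : ℂ → ℂ, DifferentiableOn ℂ H (ball c r) ∧
      ∀ z ∈ ball c r, Complex.cosh (H z) ^ 2 = F z := by
  obtain ⟨u, hu, huF⟩ := exists_sq_eq_of_ne_zero_on_ball hr hF h₀
  obtain ⟨v, hv, hvF⟩ := exists_sq_eq_of_ne_zero_on_ball hr (hF.sub_const 1)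
    fun z hz ↦ sub_ne_zero.2 (h₁ z hz)
  have huv (z : ℂ) (hz : z ∈ ball c r) : (u z + v z) * (u z - v z) = 1 := by
    linear_combination huF z hz - hvF z hz
  obtain ⟨H, hH, hexp, -⟩ := exists_exp_eq_of_ne_zero_on_ball hr (hu.fun_add hv)
    fun z hz ↦ left_ne_zero_of_mul_eq_one (huv z hz)
  refine ⟨H, hH, fun z hz ↦ ?_⟩
  have hneg : Complex.exp (-H z) = u z - v z := by
    rw [Complex.exp_neg, hexp z hz]
    exact inv_eq_of_mul_eq_one_right (huv z hz)
  have hcosh : Complex.cosh (H z) = u z := by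
    rw [Complex.cosh, hexp z hz, hneg]
    ring
  rw [hcosh, huF z hz]

theorem exists_abs_sub_le_one_cosh_sq_eq_intCast (x : ℝ) :
    ∃ y : ℝ, |y - x| ≤ 1 ∧ ∃ n : ℤ, Real.cosh y ^ 2 = n := by
  wlog hx : 0 ≤ x generalizing x
  · obtain ⟨y, hy, n, hn⟩ := this (-x) (by linarith)
    refine ⟨-y, ?_, n, by rwa [Real.cosh_neg]⟩
    rwa [← abs_neg, neg_sub, sub_neg_eq_add, add_comm, ← sub_neg_eq_add]
  have hgrowth : Real.cosh x ^ 2 + 1 ≤ Real.cosh (x + 1) ^ 2 := by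
    have hdiff : Real.cosh (x + 1) ^ 2 - Real.cosh x ^ 2 =
        Real.sinh (x + 1 + x) * Real.sinh 1 := by
      simp only [Real.sinh_add, Real.cosh_add]
      linear_combination Real.cosh x ^ 2 * Real.cosh_sq 1
    have h₁ : 1 ≤ Real.sinh 1 := Real.self_le_sinh_iff.2 zero_le_one
    have h₂ : 1 ≤ Real.sinh (x + 1 + x) :=
      (by linarith : 1 ≤ x + 1 + x).trans (Real.self_le_sinh_iff.2 (by linarith))
    nlinarith
  have hIVT := intermediate_value_Icc (f := fun t ↦ Real.cosh t ^ 2)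
    (by linarith : x ≤ x + 1) (by fun_prop)
  obtain ⟨y, hy, hyn⟩ := hIVT (show ((⌈Real.cosh x ^ 2⌉ : ℤ) : ℝ) ∈ _ from
    ⟨Int.le_ceil _, (Int.ceil_lt_add_one _).le.trans hgrowth⟩)
  exact ⟨y, abs_le.2 ⟨by linarith [hy.1], by linarith [hy.2]⟩, _, hyn⟩

theorem exists_dist_le_three_cosh_sq_eq_intCast (w : ℂ) :
    ∃ v : ℂ, dist v w ≤ 3 ∧ ∃ n : ℤ, Complex.cosh v ^ 2 = n := by
  obtain ⟨y, hy, n, hn⟩ := exists_abs_sub_le_one_cosh_sq_eq_intCast w.re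
  set k := round (w.im / Real.pi)
  have him : |k * Real.pi - w.im| ≤ 2 := by
    have hk : k * Real.pi - w.im = -((w.im / Real.pi - k) * Real.pi) := by
      field_simp [Real.pi_ne_zero]
      ring
    rw [hk, abs_neg, abs_mul, abs_of_pos Real.pi_pos]
    nlinarith [abs_sub_round (w.im / Real.pi), Real.pi_le_four, Real.pi_pos]
  refine ⟨⟨y, k * Real.pi⟩, ?_, n, ?_⟩
  · rw [dist_eq_norm]
    exact (Complex.norm_le_abs_re_add_abs_im _).trans (by simpa using by linarith)
  · have hsin : Complex.sin ((k : ℂ) * Real.pi) = 0 := Complex.sin_int_mul_pi k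
    have hcos : Complex.cos ((k : ℂ) * Real.pi) ^ 2 = 1 := by
      simpa [hsin] using Complex.sin_sq_add_cos_sq ((k : ℂ) * Real.pi)
    rw [Complex.mk_eq_add_mul_I, Complex.ofReal_mul, Complex.ofReal_intCast, Complex.cosh_add,
      Complex.cosh_mul_I, Complex.sinh_mul_I, hsin, zero_mul, mul_zero, add_zero, mul_pow, hcos,
      mul_one]
    exact_mod_cast hn

theorem norm_cosh_add_le (w d : ℂ) :
    ‖Complex.cosh (w + d)‖ ≤ (2 * ‖Complex.cosh w‖ + 1) * Real.exp ‖d‖ := by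
  have hexp : ‖Complex.exp d‖ ≤ Real.exp ‖d‖ := Complex.norm_exp_le_exp_norm d
  have hexp_neg : ‖Complex.exp (-d)‖ ≤ Real.exp ‖d‖ := by
    simpa using Complex.norm_exp_le_exp_norm (-d)
  have hcosh : ‖Complex.cosh d‖ ≤ Real.exp ‖d‖ := by
    rw [Complex.cosh, norm_div, Complex.norm_ofNat]
    linarith [norm_add_le (Complex.exp d) (Complex.exp (-d))]
  have hsinh : ‖Complex.sinh d‖ ≤ Real.exp ‖d‖ := by
    rw [Complex.sinh, norm_div, Complex.norm_ofNat]
    linarith [norm_sub_le (Complex.exp d) (Complex.exp (-d))]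
  have hsq : ‖Complex.sinh w‖ ^ 2 ≤ ‖Complex.cosh w‖ ^ 2 + 1 := by
    rw [← norm_pow, ← norm_pow, Complex.sinh_sq]
    exact (norm_sub_le _ _).trans_eq (by rw [norm_one])
  have hw : ‖Complex.sinh w‖ ≤ ‖Complex.cosh w‖ + 1 :=
    le_of_sq_le_sq (by nlinarith [norm_nonneg (Complex.cosh w)]) (by positivity)
  calc ‖Complex.cosh (w + d)‖
      ≤ ‖Complex.cosh w‖ * ‖Complex.cosh d‖ + ‖Complex.sinh w‖ * ‖Complex.sinh d‖ := by
        rw [Complex.cosh_add, ← norm_mul, ← norm_mul]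
        exact norm_add_le _ _
    _ ≤ ‖Complex.cosh w‖ * Real.exp ‖d‖ + (‖Complex.cosh w‖ + 1) * Real.exp ‖d‖ := by gcongr
    _ = (2 * ‖Complex.cosh w‖ + 1) * Real.exp ‖d‖ := by ring

theorem norm_le_of_ne_intCast_on_ball (hF : DifferentiableOn ℂ F (ball c r))
    (hint : ∀ z ∈ ball c r, ∀ n : ℤ, F z ≠ n) {z : ℂ} (hz : z ∈ ball c (r / 2)) :
    ‖F z‖ ≤ ((‖F c‖ + 2) * Real.exp 288) ^ 2 := by
  have hr : 0 < r := by linarith [pos_of_mem_ball hz]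
  obtain ⟨H, hH, hcosh⟩ := exists_cosh_sq_eq_of_ne_zero_of_ne_one_on_ball hr hF
    (fun z hz ↦ by simpa using hint z hz 0) (fun z hz ↦ by simpa using hint z hz 1)
  have hHz : ‖H z - H c‖ ≤ 288 := by
    refine (norm_sub_le_of_forall_exists_notMem_image (L := 3) hH (fun w ↦ ?_) hz).trans
      (by norm_num)
    obtain ⟨v, hv, n, hn⟩ := exists_dist_le_three_cosh_sq_eq_intCast w
    refine ⟨v, ?_, hv⟩
    rintro ⟨ζ, hζ, rfl⟩
    exact hint ζ hζ n (by rw [← hcosh ζ hζ, hn])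
  have hcenter : 2 * ‖Complex.cosh (H c)‖ ≤ ‖F c‖ + 1 := by
    rw [← hcosh c (mem_ball_self hr), norm_pow]
    linarith [two_mul_le_add_sq ‖Complex.cosh (H c)‖ 1]
  rw [← hcosh z (ball_subset_ball (by linarith) hz), norm_pow]
  gcongr
  calc ‖Complex.cosh (H z)‖ = ‖Complex.cosh (H c + (H z - H c))‖ := by rw [add_sub_cancel]
    _ ≤ (2 * ‖Complex.cosh (H c)‖ + 1) * Real.exp ‖H z - H c‖ := norm_cosh_add_le _ _
    _ ≤ (‖F c‖ + 2) * Real.exp 288 := by gcongr ?_ * Real.exp ?_; linarith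

theorem norm_log_le_of_half_le_norm {w : ℂ} (hw : 1 / 2 ≤ ‖w‖) :
    ‖Complex.log w‖ ≤ ‖w‖ + 1 + Real.pi := by
  have hpos : 0 < ‖w‖ := by linarith
  have hinv : ‖w‖⁻¹ ≤ 2 := by
    rw [inv_le_comm₀ hpos two_pos]
    linarith
  have hlog : |Real.log ‖w‖| ≤ ‖w‖ + 1 :=
    abs_le.2 ⟨by linarith [Real.one_sub_inv_le_log_of_pos hpos],
      by linarith [Real.log_le_sub_one_of_pos hpos]⟩
  calc ‖Complex.log w‖ ≤ |Real.log ‖w‖| + |w.arg| := by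
        simpa only [Complex.log_re, Complex.log_im] using
          Complex.norm_le_abs_re_add_abs_im (Complex.log w)
    _ ≤ ‖w‖ + 1 + Real.pi := add_le_add hlog (Complex.abs_arg_le_pi w)

theorem norm_le_of_zero_one_notMem_image_ball_of_half_le (hg : DifferentiableOn ℂ g (ball c r))
    (h₀ : 0 ∉ g '' ball c r) (h₁ : 1 ∉ g '' ball c r) (hc : 1 / 2 ≤ ‖g c‖) {z : ℂ}
    (hz : z ∈ ball c (r / 2)) :
    ‖g z‖ ≤ Real.exp (2 * Real.pi * ((‖g c‖ + 3 + Real.pi) * Real.exp 288) ^ 2) := by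
  have hr : 0 < r := by linarith [pos_of_mem_ball hz]
  obtain ⟨G, hG, hexp, hGc⟩ := exists_exp_eq_of_ne_zero_on_ball hr hg
    fun w hw h ↦ h₀ ⟨w, hw, h⟩
  set F : ℂ → ℂ := fun w ↦ G w / (2 * Real.pi * Complex.I)
  have hGF (w : ℂ) : G w = F w * (2 * Real.pi * Complex.I) :=
    (div_mul_cancel₀ _ Complex.two_pi_I_ne_zero).symm
  have hnorm (w : ℂ) : ‖G w‖ = 2 * Real.pi * ‖F w‖ := by
    rw [hGF w]
    simp [abs_of_pos Real.pi_pos, mul_comm]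
  have hint (w : ℂ) (hw : w ∈ ball c r) (n : ℤ) : F w ≠ n := fun hn ↦
    h₁ ⟨w, hw, by rw [← hexp w hw, hGF w, hn, Complex.exp_int_mul_two_pi_mul_I]⟩
  have hFc : ‖F c‖ ≤ ‖g c‖ + 1 + Real.pi := by
    refine le_trans ?_ (norm_log_le_of_half_le_norm hc)
    rw [← hGc, hnorm c]
    nlinarith [norm_nonneg (F c), Real.pi_gt_three]
  calc ‖g z‖ = ‖Complex.exp (G z)‖ := by rw [hexp z (ball_subset_ball (by linarith) hz)]
    _ ≤ Real.exp (2 * Real.pi * ‖F z‖) := hnorm z ▸ Complex.norm_exp_le_exp_norm _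
    _ ≤ Real.exp (2 * Real.pi * ((‖F c‖ + 2) * Real.exp 288) ^ 2) := by
      gcongr
      exact norm_le_of_ne_intCast_on_ball (hG.div_const _) hint hz
    _ ≤ Real.exp (2 * Real.pi * ((‖g c‖ + 3 + Real.pi) * Real.exp 288) ^ 2) := by
      gcongr Real.exp (2 * Real.pi * (?_ * Real.exp 288) ^ 2)
      linarith

theorem norm_le_of_zero_one_notMem_image_ball (hg : DifferentiableOn ℂ g (ball c r))
    (h₀ : 0 ∉ g '' ball c r) (h₁ : 1 ∉ g '' ball c r) {z : ℂ} (hz : z ∈ ball c (r / 2)) :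
    ‖g z‖ ≤ 1 + Real.exp (2 * Real.pi * ((‖g c‖ + 4 + Real.pi) * Real.exp 288) ^ 2) := by
  rcases le_total (1 / 2) ‖g c‖ with hc | hc
  · calc ‖g z‖ ≤ Real.exp (2 * Real.pi * ((‖g c‖ + 3 + Real.pi) * Real.exp 288) ^ 2) :=
          norm_le_of_zero_one_notMem_image_ball_of_half_le hg h₀ h₁ hc hz
      _ ≤ Real.exp (2 * Real.pi * ((‖g c‖ + 4 + Real.pi) * Real.exp 288) ^ 2) := by
        gcongr; norm_num
      _ ≤ 1 + _ := le_add_of_nonneg_left zero_le_one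
  · have hsymm := norm_le_of_zero_one_notMem_image_ball_of_half_le
      (g := fun w ↦ 1 - g w) (hg.const_sub 1)
      (fun ⟨w, hw, h⟩ ↦ h₁ ⟨w, hw, (sub_eq_zero.1 h).symm⟩)
      (fun ⟨w, hw, h⟩ ↦ h₀ ⟨w, hw, by simpa using h⟩)
      (by linarith [norm_sub_norm_le 1 (g c), norm_one (α := ℂ)]) hz
    calc ‖g z‖ = ‖1 - (1 - g z)‖ := by rw [sub_sub_cancel]
      _ ≤ 1 + ‖1 - g z‖ := by simpa using norm_sub_le 1 (1 - g z)
      _ ≤ 1 + Real.exp (2 * Real.pi * ((‖1 - g c‖ + 3 + Real.pi) * Real.exp 288) ^ 2) := by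
        gcongr
      _ ≤ 1 + Real.exp (2 * Real.pi * ((‖g c‖ + 4 + Real.pi) * Real.exp 288) ^ 2) := by
        gcongr 1 + Real.exp (2 * Real.pi * (?_ * Real.exp 288) ^ 2)
        linarith [norm_sub_le 1 (g c), norm_one (α := ℂ)]

theorem schottky (M : ℝ) {δ : ℝ} (hδ : 0 < δ) :
    ∃ C, ∀ (g : ℂ → ℂ) (a b c : ℂ) (r : ℝ), ‖a‖ ≤ M → ‖b‖ ≤ M → δ ≤ ‖b - a‖ →
      DifferentiableOn ℂ g (ball c r) → a ∉ g '' ball c r → b ∉ g '' ball c r → ‖g c‖ ≤ M →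
      ∀ z ∈ ball c (r / 2), ‖g z‖ ≤ C := by
  set B := 1 + Real.exp (2 * Real.pi * ((2 * M / δ + 4 + Real.pi) * Real.exp 288) ^ 2)
  refine ⟨2 * M * B + M, fun g a b c r ha hb hab hg hag hbg hc z hz ↦ ?_⟩
  have hba : b - a ≠ 0 := norm_pos_iff.1 (hδ.trans_le hab)
  have hM : 0 ≤ M := (norm_nonneg a).trans ha
  have hcenter : ‖(g c - a) / (b - a)‖ ≤ 2 * M / δ := by
    rw [norm_div]
    gcongr
    linarith [norm_sub_le (g c) a]
  have h₀ : 0 ∉ (fun w ↦ (g w - a) / (b - a)) '' ball c r := by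
    rintro ⟨w, hw, h⟩
    exact hag ⟨w, hw, by simpa [hba, sub_eq_zero] using h⟩
  have h₁ : 1 ∉ (fun w ↦ (g w - a) / (b - a)) '' ball c r := by
    rintro ⟨w, hw, h⟩
    exact hbg ⟨w, hw, sub_left_injective ((div_eq_one_iff_eq hba).1 h)⟩
  have hnormalized : ‖(g z - a) / (b - a)‖ ≤ B :=
    (norm_le_of_zero_one_notMem_image_ball ((hg.sub_const a).div_const _) h₀ h₁ hz).trans (by
      dsimp only [B]
      gcongr)
  calc ‖g z‖ = ‖(b - a) * ((g z - a) / (b - a)) + a‖ := by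
        rw [mul_div_cancel₀ _ hba, sub_add_cancel]
    _ ≤ ‖b - a‖ * ‖(g z - a) / (b - a)‖ + ‖a‖ := by
      rw [← norm_mul]
      exact norm_add_le _ _
    _ ≤ 2 * M * B + M := by
      gcongr
      linarith [norm_sub_le b a]

theorem little_picard (hg : Differentiable ℂ g) (hab : a ≠ b) (ha : a ∉ range g)
    (hb : b ∉ range g) : ∃ d, ∀ z, g z = d := by
  obtain ⟨C, hC⟩ := schottky (max ‖g 0‖ (max ‖a‖ ‖b‖)) (norm_sub_pos_iff.2 hab.symm)
  refine hg.exists_const_forall_eq_of_bounded (isBounded_iff_forall_norm_le.2 ⟨C, ?_⟩)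
  rintro _ ⟨z, rfl⟩
  exact hC g a b 0 (2 * (‖z‖ + 1)) (by simp) (by simp) le_rfl hg.differentiableOn
    (notMem_subset (image_subset_range _ _) ha) (notMem_subset (image_subset_range _ _) hb)
    (by simp) z (by simp)

theorem norm_log_sub_log_le {z w : ℂ} (h : ‖z‖ = ‖w‖) :
    ‖Complex.log z - Complex.log w‖ ≤ 2 * Real.pi := by
  calc ‖Complex.log z - Complex.log w‖ ≤ |z.arg - w.arg| := by
        simpa [Complex.log_re, Complex.log_im, h] using
          Complex.norm_le_abs_re_add_abs_im (Complex.log z - Complex.log w)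
    _ ≤ |z.arg| + |w.arg| := abs_sub _ _
    _ ≤ 2 * Real.pi := by linarith [Complex.abs_arg_le_pi z, Complex.abs_arg_le_pi w]

theorem schottky_sphere (M : ℝ) {δ : ℝ} (hδ : 0 < δ) :
    ∃ C, ∀ (g : ℂ → ℂ) (a b e : ℂ) (r : ℝ), 0 < r → ‖a‖ ≤ M → ‖b‖ ≤ M → δ ≤ ‖b - a‖ →
      DifferentiableOn ℂ g (ball e r \ {e}) → a ∉ g '' (ball e r \ {e}) →
      b ∉ g '' (ball e r \ {e}) → (∃ z ∈ sphere e (r * Real.exp (-14)), ‖g z‖ ≤ M) →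
      ∀ z ∈ sphere e (r * Real.exp (-14)), ‖g z‖ ≤ C := by
  obtain ⟨C, hC⟩ := schottky M hδ
  refine ⟨C, fun g a b e r hr ha hb hab hg hag hbg ⟨z₀, hz₀, hM⟩ z hz ↦ ?_⟩
  have hpos : 0 < r * Real.exp (-14) := by positivity
  have hlog {w : ℂ} (hw : w ∈ sphere e (r * Real.exp (-14))) :
      e + Complex.exp (Complex.log (w - e)) = w := by
    rw [Complex.exp_log (sub_ne_zero.2 (ne_of_mem_sphere hw hpos.ne')), add_sub_cancel]
  have hmaps : MapsTo (fun ζ ↦ e + Complex.exp ζ) (ball (Complex.log (z₀ - e)) 14)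
      (ball e r \ {e}) := by
    intro ζ hζ
    refine ⟨?_, by simp⟩
    have hre : ζ.re < Real.log r := by
      have := (Complex.re_le_norm _).trans_lt (mem_ball_iff_norm.1 hζ)
      rw [Complex.sub_re, Complex.log_re, mem_sphere_iff_norm.1 hz₀,
        Real.log_mul hr.ne' (Real.exp_ne_zero _), Real.log_exp] at this
      linarith
    rw [mem_ball_iff_norm, add_sub_cancel_left, Complex.norm_exp]
    exact (Real.lt_log_iff_exp_lt hr).1 hre
  -- The radius `14` was chosen because `14 / 2 > 2 * π`.
  have hmem : Complex.log (z - e) ∈ ball (Complex.log (z₀ - e)) (14 / 2) := by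
    rw [mem_ball_iff_norm]
    have hnorm : ‖z - e‖ = ‖z₀ - e‖ := by rw [mem_sphere_iff_norm.1 hz, mem_sphere_iff_norm.1 hz₀]
    linarith [norm_log_sub_log_le hnorm, Real.pi_lt_d2]
  have himage : (fun ζ ↦ g (e + Complex.exp ζ)) '' ball (Complex.log (z₀ - e)) 14 ⊆
      g '' (ball e r \ {e}) := by
    rintro _ ⟨ζ, hζ, rfl⟩
    exact mem_image_of_mem g (hmaps hζ)
  have := hC (fun ζ ↦ g (e + Complex.exp ζ)) a b (Complex.log (z₀ - e)) 14 ha hb hab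
    (hg.comp (Complex.differentiable_exp.const_add e).differentiableOn hmaps)
    (fun h ↦ hag (himage h)) (fun h ↦ hbg (himage h)) (by rwa [hlog hz₀]) _ hmem
  rwa [hlog hz] at this

theorem exists_norm_le_of_image_diff_singleton (M : ℝ) (hab : a ≠ b) :
    ∃ C, ∀ (g : ℂ → ℂ) (e : ℂ) (r : ℝ), DifferentiableOn ℂ g (ball e r) →
      a ∉ g '' (ball e r \ {e}) → b ∉ g '' (ball e r \ {e}) → ‖g e‖ ≤ M →
      ∀ z ∈ ball e (r * Real.exp (-14)), ‖g z‖ ≤ C := by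
  set K := 3 * M + 2 * max ‖a‖ ‖b‖ + 1
  obtain ⟨C, hC⟩ := schottky_sphere K (norm_sub_pos_iff.2 hab.symm)
  refine ⟨C, fun g e r hg hag hbg hM z hz ↦ ?_⟩
  have hρ : 0 < r * Real.exp (-14) := pos_of_mem_ball hz
  have hr : 0 < r := pos_of_mul_pos_left hρ (Real.exp_nonneg _)
  have hM₀ : 0 ≤ M := (norm_nonneg _).trans hM
  have hsub : closedBall e (r * Real.exp (-14)) ⊆ ball e r :=
    closedBall_subset_ball (mul_lt_of_lt_one_right hr (by simp))
  have hcl : DiffContOnCl ℂ g (ball e (r * Real.exp (-14))) :=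
    (hg.mono (closure_ball_subset_closedBall.trans hsub)).diffContOnCl
  have hsphere : ∃ w ∈ sphere e (r * Real.exp (-14)), ‖g w‖ ≤ K := by
    -- Otherwise the image of the disc covers `a` and `b`, which are both attained only at `e`.
    by_contra! hlarge
    have hcover := ball_subset_image_closedBall_of_le_norm_sub
      (ε := 2 * (M + max ‖a‖ ‖b‖) + 1) hcl hρ fun w hw ↦ by
        linarith [norm_sub_norm_le (g w) (g e), hlarge w hw]
    have hcenter (v : ℂ) (hv : ‖v‖ ≤ max ‖a‖ ‖b‖) (hvg : v ∉ g '' (ball e r \ {e})) : g e = v := by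
      obtain ⟨w, hw, rfl⟩ := hcover (show v ∈ ball _ _ by
        rw [mem_ball_iff_norm]
        linarith [norm_sub_le v (g e)])
      by_contra hne
      exact hvg ⟨w, ⟨hsub hw, fun h ↦ hne (by rw [h])⟩, rfl⟩
    exact hab ((hcenter a (le_max_left _ _) hag).symm.trans (hcenter b (le_max_right _ _) hbg))
  refine Complex.norm_le_of_forall_mem_frontier_norm_le isBounded_ball hcl
    (fun w hw ↦ hC g a b e r hr ?_ ?_ le_rfl (hg.mono sdiff_subset) hag hbg hsphere w ?_)
    (subset_closure hz)
  · linarith [le_max_left ‖a‖ ‖b‖, norm_nonneg a]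
  · linarith [le_max_right ‖a‖ ‖b‖, norm_nonneg b]
  · rwa [frontier_ball _ hρ.ne'] at hw

end Schottky

/-! ### Periodic points of entire functions -/

section PeriodicPoints

variable {f : ℂ → ℂ} {c d : ℂ}

theorem exists_apply_apply_sub_eq_mul_of_forall_apply_apply_ne (hf : Differentiable ℂ f)
    (h : ∀ z, f (f z) ≠ z) : ∃ c, c ≠ 0 ∧ c ≠ 1 ∧ ∀ z, f (f z) - z = c * (f z - z) := by
  have hfix (z : ℂ) : f z ≠ z := fun hz ↦ h z (by rw [hz, hz])
  have hsub (z : ℂ) : f z - z ≠ 0 := sub_ne_zero.2 (hfix z)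
  set g : ℂ → ℂ := fun z ↦ (f (f z) - z) / (f z - z)
  have hg₀ (z : ℂ) : g z ≠ 0 := div_ne_zero (sub_ne_zero.2 (h z)) (hsub z)
  have hg₁ (z : ℂ) : g z ≠ 1 := fun hz ↦
    hfix (f z) (sub_left_injective ((div_eq_one_iff_eq (hsub z)).1 hz))
  obtain ⟨c, hc⟩ := little_picard
    (((hf.comp hf).sub differentiable_id).div (hf.sub differentiable_id) hsub : Differentiable ℂ g)
    zero_ne_one (fun ⟨z, hz⟩ ↦ hg₀ z hz) (fun ⟨z, hz⟩ ↦ hg₁ z hz)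
  exact ⟨c, hc 0 ▸ hg₀ 0, hc 0 ▸ hg₁ 0, fun z ↦ (div_eq_iff (hsub z)).1 (hc z)⟩

theorem exists_deriv_eq_of_apply_apply_sub_eq_mul (hf : Differentiable ℂ f) (hc₀ : c ≠ 0)
    (hc₁ : c ≠ 1) (h : ∀ z, f (f z) - z = c * (f z - z)) : ∃ d, ∀ z, deriv f z = d := by
  have hderiv (z : ℂ) : deriv f z * (deriv f (f z) - c) = 1 - c := by
    have hleft := ((hf (f z)).hasDerivAt.comp z (hf z).hasDerivAt).sub (hasDerivAt_id z)
    have hright := ((hf z).hasDerivAt.sub (hasDerivAt_id z)).const_mul c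
    have hleft_eq : f ∘ f - id = fun z ↦ c * (f - id : ℂ → ℂ) z := funext h
    linear_combination hleft.unique (hleft_eq ▸ hright)
  have hne (z : ℂ) : deriv f z * (deriv f (f z) - c) ≠ 0 := by
    rw [hderiv]
    exact sub_ne_zero.2 hc₁.symm
  have hdiff : Differentiable ℂ (deriv f) := fun z ↦ (hf.analyticAt z).deriv.differentiableAt
  obtain ⟨d, hd⟩ := little_picard (hdiff.comp hf) hc₀.symm
    (fun ⟨z, hz⟩ ↦ left_ne_zero_of_mul (hne (f z)) hz)
    (fun ⟨z, hz⟩ ↦ right_ne_zero_of_mul (hne z) (sub_eq_zero.2 hz))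
  refine ⟨(1 - c) / (d - c), fun z ↦ ?_⟩
  rw [← hd z, comp_apply, ← hderiv z, mul_div_cancel_right₀ _ (right_ne_zero_of_mul (hne z))]

theorem eq_mul_add_of_deriv_eq (hf : Differentiable ℂ f) (h : ∀ z, deriv f z = d) (z : ℂ) :
    f z = d * z + f 0 := by
  have hderiv (w : ℂ) : HasDerivAt (fun z ↦ f z - d * z) 0 w := by
    simpa [h w] using (hf w).hasDerivAt.fun_sub ((hasDerivAt_id w).const_mul d)
  have hconst : f z - d * z = f 0 - d * 0 := is_const_of_deriv_eq_zero
    (fun w ↦ (hderiv w).differentiableAt) (fun w ↦ (hderiv w).deriv) z 0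
  linear_combination hconst

theorem exists_apply_apply_eq_self (hf : Differentiable ℂ f)
    (htranslation : ¬∃ b ≠ 0, ∀ z, f z = z + b) : ∃ z, f (f z) = z := by
  by_contra! h
  obtain ⟨c, hc₀, hc₁, hc⟩ := exists_apply_apply_sub_eq_mul_of_forall_apply_apply_ne hf h
  obtain ⟨d, hd⟩ := exists_deriv_eq_of_apply_apply_sub_eq_mul hf hc₀ hc₁ hc
  have haffine := eq_mul_add_of_deriv_eq hf hd
  rcases eq_or_ne d 1 with rfl | hd₁
  · exact htranslation ⟨f 0, fun h₀ ↦ h 0 (by rw [h₀, h₀]), fun z ↦ by simpa using haffine z⟩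
  · have hfix : f (f 0 / (1 - d)) = f 0 / (1 - d) := by
      rw [haffine]
      field_simp [sub_ne_zero.2 hd₁.symm]
      ring
    exact h _ (by rw [hfix, hfix])

end PeriodicPoints

/-! ### Bounded and stably bounded orbits -/

section BoundedOrbits

variable {f : ℂ → ℂ} {z : ℂ} {N : ℕ}

theorem mem_boundedOrbitSet_iff : z ∈ boundedOrbitSet f ↔ ∃ C, ∀ n, ‖f^[n] z‖ ≤ C := by
  simp [boundedOrbitSet, isBounded_iff_forall_norm_le]

theorem apply_mem_boundedOrbitSet_iff : f z ∈ boundedOrbitSet f ↔ z ∈ boundedOrbitSet f := by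
  simp only [mem_boundedOrbitSet_iff]
  refine ⟨fun ⟨C, hC⟩ ↦ ⟨max C ‖z‖, fun n ↦ ?_⟩, fun ⟨C, hC⟩ ↦ ⟨C, fun n ↦ hC (n + 1)⟩⟩
  cases n with
  | zero => exact le_max_right _ _
  | succ n => exact (hC n).trans (le_max_left _ _)

theorem iterate_mem_boundedOrbitSet_iff (n : ℕ) :
    f^[n] z ∈ boundedOrbitSet f ↔ z ∈ boundedOrbitSet f := by
  induction n with
  | zero => rfl
  | succ n ih => rw [iterate_succ_apply', apply_mem_boundedOrbitSet_iff, ih]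

theorem mem_boundedOrbitSet_of_isPeriodicPt (hN : 0 < N) (hz : IsPeriodicPt f N z) :
    z ∈ boundedOrbitSet f := by
  refine ((finite_Iio N).image fun n ↦ f^[n] z).isBounded.subset ?_
  rintro _ ⟨n, rfl⟩
  exact ⟨n % N, Nat.mod_lt n hN, hz.iterate_mod_apply n⟩

theorem exists_forall_norm_iterate_le_of_iterate {E : Type*} [SeminormedAddCommGroup E]
    [ProperSpace E] {f : E → E} (hf : Continuous f) (hN : 0 < N) (C : ℝ) :
    ∃ C', ∀ z, (∀ n, ‖(f^[N])^[n] z‖ ≤ C) → ∀ n, ‖f^[n] z‖ ≤ C' := by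
  obtain ⟨C', hC'⟩ := ((finite_Iio N).isCompact_biUnion fun r _ ↦
    (isCompact_closedBall (0 : E) C).image (hf.iterate r)).isBounded.exists_norm_le
  refine ⟨C', fun z hz n ↦ hC' _ (mem_biUnion (Nat.mod_lt n hN) ⟨(f^[N])^[n / N] z, ?_, ?_⟩)⟩
  · exact mem_closedBall_zero_iff.2 (hz _)
  · rw [← iterate_mul, ← iterate_add_apply, Nat.mod_add_div]

theorem boundedOrbitSet_iterate (hf : Continuous f) (hN : 0 < N) :
    boundedOrbitSet f^[N] = boundedOrbitSet f := by
  ext z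
  simp only [mem_boundedOrbitSet_iff]
  refine ⟨fun ⟨C, hC⟩ ↦ ?_, fun ⟨C, hC⟩ ↦ ⟨C, fun n ↦ iterate_mul f N n ▸ hC (N * n)⟩⟩
  exact (exists_forall_norm_iterate_le_of_iterate hf hN C).imp fun C' hC' ↦ hC' z hC

/-- The points near which all iterates of `f` are uniformly bounded. For entire `f` this is the
part of `K(f)` lying in the Fatou set. -/
def stablyBoundedOrbitSet (f : ℂ → ℂ) : Set ℂ :=
  {z | ∃ C, ∀ᶠ w in 𝓝 z, ∀ n, ‖f^[n] w‖ ≤ C}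

theorem boundedOrbitSet_mem_nhds (hz : z ∈ stablyBoundedOrbitSet f) :
    boundedOrbitSet f ∈ 𝓝 z := by
  obtain ⟨C, hC⟩ := hz
  filter_upwards [hC] with w hw using mem_boundedOrbitSet_iff.2 ⟨C, hw⟩

theorem mem_stablyBoundedOrbitSet_of_apply (hf : Continuous f)
    (hz : f z ∈ stablyBoundedOrbitSet f) : z ∈ stablyBoundedOrbitSet f := by
  obtain ⟨C, hC⟩ := hz
  refine ⟨max C (‖z‖ + 1), ?_⟩
  filter_upwards [hf.continuousAt.eventually hC,
    continuous_norm.continuousAt.eventually_le_const (lt_add_one ‖z‖)] with w hfw hw n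
  cases n with
  | zero => exact hw.trans (le_max_right _ _)
  | succ n => exact (hfw n).trans (le_max_left _ _)

theorem mem_stablyBoundedOrbitSet_of_iterate_apply (hf : Continuous f) (n : ℕ)
    (hz : f^[n] z ∈ stablyBoundedOrbitSet f) : z ∈ stablyBoundedOrbitSet f := by
  induction n with
  | zero => exact hz
  | succ n ih => exact ih (mem_stablyBoundedOrbitSet_of_apply hf (iterate_succ_apply' f n z ▸ hz))

theorem stablyBoundedOrbitSet_iterate_subset (hf : Continuous f) (hN : 0 < N) :
    stablyBoundedOrbitSet f^[N] ⊆ stablyBoundedOrbitSet f := by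
  rintro z ⟨C, hC⟩
  obtain ⟨C', hC'⟩ := exists_forall_norm_iterate_le_of_iterate hf hN C
  exact ⟨C', hC.mono hC'⟩

end BoundedOrbits

/-! ### Unstable points of `K(f)` -/

section Unstable

variable {f : ℂ → ℂ} {N : ℕ}

theorem exists_forall_iterate_mem_of_subset_image {X : Type*} [TopologicalSpace X] [T2Space X]
    {g : X → X} {S : Set X} (hg : Continuous g) (hS : IsCompact S) (hne : S.Nonempty)
    (h : S ⊆ g '' S) : ∃ x, ∀ n, g^[n] x ∈ S := by
  set t : ℕ → Set X := fun k ↦ ⋂ j ≤ k, g^[j] ⁻¹' S with ht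
  have hclosed (k : ℕ) : IsClosed (t k) :=
    isClosed_biInter fun j _ ↦ hS.isClosed.preimage (hg.iterate j)
  have himage (k : ℕ) : S ⊆ g^[k] '' t k := by
    induction k with
    | zero => simp [ht]
    | succ k ih =>
      intro s hs
      obtain ⟨s', hs', rfl⟩ := h hs
      obtain ⟨x, hx, rfl⟩ := ih hs'
      refine ⟨x, ?_, iterate_succ_apply' g k x⟩
      simp only [ht, biInter_le_succ]
      exact ⟨hx, by rwa [mem_preimage, iterate_succ_apply']⟩
  obtain ⟨x, hx⟩ := IsCompact.nonempty_iInter_of_sequence_nonempty_isCompact_isClosed t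
    (fun k ↦ biInter_mono (fun j hj ↦ Nat.le_succ_of_le hj) fun _ _ ↦ subset_rfl)
    (fun k ↦ (hne.mono (himage k)).of_image) (hS.of_isClosed_subset (hclosed 0) (by simp [ht]))
    hclosed
  exact ⟨x, fun n ↦ mem_iInter₂.1 (mem_iInter.1 hx n) n le_rfl⟩

theorem subset_boundedOrbitSet_of_subset_image_iterate (hf : Continuous f)
    (hK : IsOpen (boundedOrbitSet f)) {S : Set ℂ} (hS : IsCompact S) (hN : 0 < N)
    (h : S ⊆ f^[N] '' S) : S ⊆ boundedOrbitSet f := by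
  by_contra hSK
  have hcover : S \ boundedOrbitSet f ⊆ f^[N] '' (S \ boundedOrbitSet f) := by
    rintro w ⟨hw, hwK⟩
    obtain ⟨z, hz, rfl⟩ := h hw
    exact ⟨z, ⟨hz, mt (iterate_mem_boundedOrbitSet_iff N).2 hwK⟩, rfl⟩
  obtain ⟨x, hx⟩ := exists_forall_iterate_mem_of_subset_image (hf.iterate N) (hS.diff hK)
    (sdiff_nonempty.2 hSK) hcover
  obtain ⟨C, hC⟩ := hS.isBounded.exists_norm_le
  refine (hx 0).2 ?_
  rw [← boundedOrbitSet_iterate hf hN]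
  exact mem_boundedOrbitSet_iff.2 ⟨C, fun n ↦ hC _ (hx n).1⟩

theorem exists_closedBall_subset_image_iterate (hf : Differentiable ℂ f) {q q₁ q₂ : ℂ} {ρ : ℝ}
    (hρ : 0 < ρ) (hq : q ∈ closure (boundedOrbitSet f)) (hqK : q ∉ boundedOrbitSet f)
    (hdist : 4 * ρ ≤ dist q₁ q₂) :
    ∃ n > 0, closedBall q₁ ρ ⊆ f^[n] '' closedBall q ρ ∨
      closedBall q₂ ρ ⊆ f^[n] '' closedBall q ρ := by
  by_contra! hcover
  obtain ⟨z, hzK, hz⟩ := Metric.mem_closure_iff.1 hq (ρ / 3) (by positivity)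
  obtain ⟨C₀, hC₀⟩ := mem_boundedOrbitSet_iff.1 hzK
  obtain ⟨C, hC⟩ := schottky (max C₀ (max (‖q₁‖ + ρ) (‖q₂‖ + ρ))) (by positivity : 0 < 2 * ρ)
  have hsub : ball z (2 * ρ / 3) ⊆ closedBall q ρ :=
    (ball_subset_ball' (by rw [dist_comm]; linarith)).trans ball_subset_closedBall
  refine hqK (mem_boundedOrbitSet_iff.2 ⟨max C ‖q‖, fun n ↦ ?_⟩)
  rcases Nat.eq_zero_or_pos n with rfl | hn
  · exact le_max_right _ _
  obtain ⟨a, ha, ha'⟩ := not_subset.1 (hcover n hn).1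
  obtain ⟨b, hb, hb'⟩ := not_subset.1 (hcover n hn).2
  have hab : 2 * ρ ≤ ‖b - a‖ := by
    rw [← dist_eq_norm]
    linarith [dist_triangle4 q₁ a b q₂, mem_closedBall'.1 ha, mem_closedBall.1 hb, dist_comm a b]
  refine le_max_of_le_left (hC f^[n] a b z (2 * ρ / 3) ?_ ?_ hab (hf.iterate n).differentiableOn
    (fun h ↦ ha' (image_mono hsub h)) (fun h ↦ hb' (image_mono hsub h)) ?_ q ?_)
  · exact le_max_of_le_right (le_max_of_le_left (norm_le_of_mem_closedBall ha))
  · exact le_max_of_le_right (le_max_of_le_right (norm_le_of_mem_closedBall hb))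
  · exact le_max_of_le_left (hC₀ n)
  · rw [mem_ball]
    linarith

theorem diff_stablyBoundedOrbitSet_nonempty (hf : Differentiable ℂ f)
    (hne : (boundedOrbitSet f).Nonempty) (huniv : boundedOrbitSet f ≠ univ) :
    (boundedOrbitSet f \ stablyBoundedOrbitSet f).Nonempty := by
  by_contra hempty
  have hopen : IsOpen (boundedOrbitSet f) := isOpen_iff_mem_nhds.2 fun p hp ↦
    boundedOrbitSet_mem_nhds (sdiff_eq_empty.1 (not_nonempty_iff_eq_empty.1 hempty) hp)
  obtain ⟨q, hqc, hqK⟩ := hopen.frontier_eq ▸ nonempty_frontier_iff.2 ⟨hne, huniv⟩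
  have hfqK : f q ∉ boundedOrbitSet f := mt apply_mem_boundedOrbitSet_iff.1 hqK
  have hfqc : f q ∈ closure (boundedOrbitSet f) :=
    map_mem_closure hf.continuous hqc fun z ↦ apply_mem_boundedOrbitSet_iff.2
  have hq : 0 < dist q (f q) := dist_pos.2 fun h ↦
    hqK (mem_boundedOrbitSet_of_isPeriodicPt one_pos h.symm)
  set ρ := dist q (f q) / 4
  have hρ : 0 < ρ := by positivity
  have hdist : 4 * ρ ≤ dist q (f q) := by simp only [ρ]; linarith
  have hself {x : ℂ} (hx : x ∉ boundedOrbitSet f) {n : ℕ} (hn : 0 < n) :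
      ¬closedBall x ρ ⊆ f^[n] '' closedBall x ρ := fun h ↦
    hx (subset_boundedOrbitSet_of_subset_image_iterate hf.continuous hopen
      (isCompact_closedBall x ρ) hn h (mem_closedBall_self hρ.le))
  -- Two discs, each covering one of the two: some disc must cover itself.
  obtain ⟨m, hm, hqm⟩ := exists_closedBall_subset_image_iterate hf hρ hqc hqK hdist
  obtain ⟨n, hn, hfqn⟩ := exists_closedBall_subset_image_iterate hf hρ hfqc hfqK hdist
  have hq_fq := hqm.resolve_left (hself hqK hm)
  have hfq_q := hfqn.resolve_right (hself hfqK hn)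
  refine hself hqK (Nat.add_pos_left hn m) ?_
  rw [iterate_add, image_comp]
  exact hfq_q.trans (image_mono hq_fq)

end Unstable

/-! ### Blow-up at unstable points -/

section BlowUp

variable {f : ℂ → ℂ} {p a b : ℂ}

theorem frequently_exists_iterate_eq_or_eq (hf : Differentiable ℂ f) (hp : p ∈ boundedOrbitSet f)
    (hpu : p ∉ stablyBoundedOrbitSet f) (hab : a ≠ b) :
    ∃ᶠ z in 𝓝[≠] p, ∃ n, f^[n] z = a ∨ f^[n] z = b := by
  by_contra hfreq
  obtain ⟨r, hr, homit⟩ := mem_nhdsWithin_iff.1 (not_frequently.1 hfreq)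
  rw [← sdiff_eq] at homit
  obtain ⟨M, hM⟩ := mem_boundedOrbitSet_iff.1 hp
  obtain ⟨C, hC⟩ := exists_norm_le_of_image_diff_singleton M hab
  refine hpu ⟨C, ?_⟩
  filter_upwards [ball_mem_nhds p (mul_pos hr (Real.exp_pos (-14)))] with w hw n
  exact hC f^[n] p r (hf.iterate n).differentiableOn
    (fun ⟨z, hz, hza⟩ ↦ homit hz ⟨n, Or.inl hza⟩) (fun ⟨z, hz, hzb⟩ ↦ homit hz ⟨n, Or.inr hzb⟩)
    (hM n) w hw

theorem preperfect_boundedOrbitSet (hf : Differentiable ℂ f) (hK : (boundedOrbitSet f).Nontrivial) :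
    Preperfect (boundedOrbitSet f) := by
  intro p hp
  rw [accPt_iff_frequently_nhdsNE]
  by_cases hps : p ∈ stablyBoundedOrbitSet f
  · have hnear : ∀ᶠ y in 𝓝[≠] p, y ∈ boundedOrbitSet f :=
      mem_nhdsWithin_of_mem_nhds (boundedOrbitSet_mem_nhds hps)
    exact hnear.frequently
  · obtain ⟨a, ha, b, hb, hab⟩ := hK
    refine (frequently_exists_iterate_eq_or_eq hf hp hps hab).mono ?_
    rintro z ⟨n, rfl | rfl⟩
    exacts [(iterate_mem_boundedOrbitSet_iff n).1 ha, (iterate_mem_boundedOrbitSet_iff n).1 hb]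

end BlowUp

/-! ### Finitely many components -/

section FinitelyManyComponents

variable {X : Type*} [TopologicalSpace X] {F : Set X} {x y : X}

theorem mem_connectedComponentIn_of_mem_closure (hy : y ∈ F)
    (h : y ∈ closure (connectedComponentIn F x)) : y ∈ connectedComponentIn F x := by
  have hx : x ∈ F := connectedComponentIn_nonempty_iff.1 (closure_nonempty_iff.1 ⟨y, h⟩)
  have hins : IsPreconnected (insert y (connectedComponentIn F x)) :=
    isPreconnected_connectedComponentIn.subset_closure (subset_insert _ _)
      (insert_subset h subset_closure)
  exact hins.subset_connectedComponentIn (mem_insert_of_mem y (mem_connectedComponentIn hx))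
    (insert_subset hy (connectedComponentIn_subset F x)) (mem_insert _ _)

theorem eventually_connectedComponentIn_eq (hfin : (connectedComponentIn F '' F).Finite)
    (hx : x ∈ F) : ∀ᶠ y in 𝓝[F] x, connectedComponentIn F y = connectedComponentIn F x := by
  have hother : ∀ᶠ y in 𝓝 x, ∀ C ∈ connectedComponentIn F '' F \ {connectedComponentIn F x},
      y ∉ C := by
    rw [eventually_all_finite hfin.sdiff]
    rintro _ ⟨⟨z, -, rfl⟩, hzx⟩
    have hxz : x ∉ closure (connectedComponentIn F z) := fun h ↦
      hzx (connectedComponentIn_eq (mem_connectedComponentIn_of_mem_closure hx h))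
    filter_upwards [isClosed_closure.compl_mem_nhds hxz] with y hy hyz using hy (subset_closure hyz)
  filter_upwards [mem_nhdsWithin_of_mem_nhds hother, self_mem_nhdsWithin] with y hy hyF
  by_contra hne
  exact hy _ ⟨mem_image_of_mem _ hyF, hne⟩ (mem_connectedComponentIn hyF)

theorem connectedComponentIn_apply_eq {g : X → X} (hg : Continuous g) (hF : MapsTo g F F)
    (hx : x ∈ F) (hy : y ∈ F) (h : connectedComponentIn F x = connectedComponentIn F y) :
    connectedComponentIn F (g x) = connectedComponentIn F (g y) := by
  have hyx : y ∈ connectedComponentIn F x := h ▸ mem_connectedComponentIn hy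
  exact connectedComponentIn_eq <| connectedComponentIn_mono _ hF.image_subset <|
    hg.continuousOn.mapsTo_connectedComponentIn hx hyx

theorem connectedComponentIn_iterate_eq {g : X → X} (hg : Continuous g) (hF : MapsTo g F F)
    (hx : x ∈ F) (h : connectedComponentIn F (g x) = connectedComponentIn F x) (n : ℕ) :
    connectedComponentIn F (g^[n] x) = connectedComponentIn F x := by
  induction n with
  | zero => rfl
  | succ n ih =>
    rw [iterate_succ_apply']
    exact (connectedComponentIn_apply_eq hg hF (hF.iterate n hx) hx ih).trans h

theorem isPreconnected_of_forall_connectedComponentIn_eq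
    (h : ∀ y ∈ F, connectedComponentIn F y = connectedComponentIn F x) : IsPreconnected F :=
  isPreconnected_connectedComponentIn.subset_closure (connectedComponentIn_subset F x) fun y hy ↦
    subset_closure (h y hy ▸ mem_connectedComponentIn hy)

end FinitelyManyComponents

section Components

variable {f : ℂ → ℂ} {p : ℂ}

theorem isPreconnected_boundedOrbitSet_of_connectedComponentIn_apply_eq (hf : Differentiable ℂ f)
    (hfin : (connectedComponentIn (boundedOrbitSet f) '' boundedOrbitSet f).Finite)
    (hp : p ∈ boundedOrbitSet f) (hpu : p ∉ stablyBoundedOrbitSet f)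
    (hcomp : connectedComponentIn (boundedOrbitSet f) (f p) =
      connectedComponentIn (boundedOrbitSet f) p) :
    IsPreconnected (boundedOrbitSet f) := by
  rcases (boundedOrbitSet f).subsingleton_or_nontrivial with hsub | hnontriv
  · exact hsub.isPreconnected
  refine isPreconnected_of_forall_connectedComponentIn_eq (x := p) fun x hx ↦ ?_
  have hmaps : MapsTo f (boundedOrbitSet f) (boundedOrbitSet f) := fun z ↦
    apply_mem_boundedOrbitSet_iff.2
  have hlocal {w : ℂ} (hw : w ∈ boundedOrbitSet f) : ∀ᶠ z in 𝓝[≠] w, z ∈ boundedOrbitSet f →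
      connectedComponentIn (boundedOrbitSet f) z = connectedComponentIn (boundedOrbitSet f) w :=
    (eventually_nhdsWithin_iff.1
      (eventually_connectedComponentIn_eq hfin hw)).filter_mono nhdsWithin_le_nhds
  have hacc : AccPt x (𝓟 (boundedOrbitSet f)) := preperfect_boundedOrbitSet hf hnontriv x hx
  obtain ⟨y, ⟨hy, hycomp⟩, hyx⟩ := (((accPt_iff_frequently_nhdsNE.1 hacc).and_eventually
    (hlocal hx)).and_eventually self_mem_nhdsWithin).exists
  obtain ⟨z, ⟨n, hn⟩, hzcomp⟩ :=
    ((frequently_exists_iterate_eq_or_eq hf hp hpu hyx).and_eventually (hlocal hp)).exists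
  have hnK : f^[n] z ∈ boundedOrbitSet f := by
    rcases hn with h | h <;> rwa [h]
  have hz : z ∈ boundedOrbitSet f := (iterate_mem_boundedOrbitSet_iff n).1 hnK
  calc
    connectedComponentIn (boundedOrbitSet f) x
      = connectedComponentIn (boundedOrbitSet f) (f^[n] z) := by
        rcases hn with h | h <;> rw [h]
        exact (hycomp hy).symm
    _ = connectedComponentIn (boundedOrbitSet f) (f^[n] p) :=
        connectedComponentIn_apply_eq (hf.iterate n).continuous (hmaps.iterate n) hz hp (hzcomp hz)
    _ = connectedComponentIn (boundedOrbitSet f) p :=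
        connectedComponentIn_iterate_eq hf.continuous hmaps hp hcomp n

theorem isPreconnected_boundedOrbitSet_of_finite (hf : Differentiable ℂ f)
    (hfin : (connectedComponentIn (boundedOrbitSet f) '' boundedOrbitSet f).Finite) :
    IsPreconnected (boundedOrbitSet f) := by
  rcases (boundedOrbitSet f).eq_empty_or_nonempty with hempty | hne
  · exact hempty ▸ isPreconnected_empty
  by_cases huniv : boundedOrbitSet f = univ
  · exact huniv ▸ isPreconnected_univ
  obtain ⟨q, hq, hqu⟩ := diff_stablyBoundedOrbitSet_nonempty hf hne huniv
  have hqK (n : ℕ) : f^[n] q ∈ boundedOrbitSet f := (iterate_mem_boundedOrbitSet_iff n).2 hq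
  obtain ⟨m, n, hmn, hcomp⟩ := Set.Finite.exists_lt_map_eq_of_forall_mem
    (fun n ↦ mem_image_of_mem (connectedComponentIn (boundedOrbitSet f)) (hqK n)) hfin
  have hN : 0 < n - m := Nat.sub_pos_of_lt hmn
  have hK := boundedOrbitSet_iterate hf.continuous hN
  have hreturn : f^[n - m] (f^[m] q) = f^[n] q := by
    rw [← iterate_add_apply, Nat.sub_add_cancel hmn.le]
  rw [← hK] at hfin hcomp ⊢
  refine isPreconnected_boundedOrbitSet_of_connectedComponentIn_apply_eq (p := f^[m] q)
    (hf.iterate _) hfin (hK ▸ hqK m) (fun h ↦ hqu ?_) (hreturn ▸ hcomp.symm)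
  exact mem_stablyBoundedOrbitSet_of_iterate_apply hf.continuous m
    (stablyBoundedOrbitSet_iterate_subset hf.continuous hN h)

end Components

theorem Kf_connected_or_infinitely_many_components_general (f : ℂ → ℂ) (hf : Differentiable ℂ f)
    (htranslation : ¬∃ b ≠ 0, ∀ z, f z = z + b) :
    IsConnected (boundedOrbitSet f) ∨
      {C : Set ℂ | ∃ z ∈ boundedOrbitSet f,
        C = connectedComponentIn (boundedOrbitSet f) z}.Infinite := by
  obtain ⟨z, hz⟩ := exists_apply_apply_eq_self hf htranslation
  have hzK : z ∈ boundedOrbitSet f := mem_boundedOrbitSet_of_isPeriodicPt two_pos hz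
  refine or_iff_not_imp_right.2 fun hfin ↦ ⟨⟨z, hzK⟩, ?_⟩
  refine isPreconnected_boundedOrbitSet_of_finite hf ((not_infinite.1 hfin).subset ?_)
  rintro _ ⟨w, hw, rfl⟩
  exact ⟨w, hw, rfl⟩

/-- For a transcendental entire function, `K(f)` is either connected or has infinitely
many connected components. -/
theorem Kf_connected_or_infinitely_many_components (f : ℂ → ℂ)
    (hf : TranscendentalEntire f) :
    IsConnected (boundedOrbitSet f) ∨
      {C : Set ℂ | ∃ z ∈ boundedOrbitSet f,
        C = connectedComponentIn (boundedOrbitSet f) z}.Infinite :=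
  Kf_connected_or_infinitely_many_components_general f hf.1 fun ⟨b, _, hb⟩ ↦
    hf.2 ⟨Polynomial.X + Polynomial.C b, by simpa using hb⟩
end

section
/- Let f : ℂ → ℂ be the entire function defined by the infinite product f(z) = ∏_{n=1}^∞ (1 + z/2ⁿ)². Then K(f) is totally disconnected. -/
open Filter Topology

/-!
Write `f = g²` with `g z = ∏ (1 + z/2ⁿ)`. Since all zeros of `g` are real, `g` does not decrease the
pseudo-hyperbolic distance `ρ` within a component `U` of the set where `z` and `g z` are both
nonreal. For a finite product `P` this is a Schwarz–Pick inequality for the inverse of `P` on `U`: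
`P` is injective there because `Im (P'/P)` has constant sign on each half-plane, and the boundary
of `U` is mapped into `ℝ`, so the maximum principle applies to the quotient of the two distances;
the infinite product follows by passing to the limit. Squaring increases `ρ` strictly, and by a
factor bounded away from `1` on compact sets.

Nonnegative real points escape to infinity, so `K(f)` contains no point `z` with `z` or `g z`
real. The images of two points in one component of `K(f)` thus always share a component of that set,
and their distance `ρ`, which is at most `1` but grows geometrically, must vanish.
-/

open Bornology Set
open scoped ComplexConjugate

section Topology

variable {X : Type*} [TopologicalSpace X]

lemma mul_pos_of_isPreconnected_of_ne_zero {s : Set X} {u : X → ℝ} (hs : IsPreconnected s)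
    (hu : ContinuousOn u s) (hne : ∀ x ∈ s, u x ≠ 0) {x y : X} (hx : x ∈ s) (hy : y ∈ s) :
    0 < u x * u y := by
  by_contra! hxy
  have h0 : (0 : ℝ) ∈ uIcc (u x) (u y) := by
    rw [mem_uIcc]
    rcases mul_nonpos_iff.1 hxy with h | h
    · exact .inr h.symm
    · exact .inl h
  obtain ⟨c, hc, hc0⟩ := (hs.image u hu).ordConnected.uIcc_subset
    (mem_image_of_mem u hx) (mem_image_of_mem u hy) h0
  exact hne c hc hc0

lemma frontier_connectedComponentIn_subset_compl [LocallyConnectedSpace X] {V : Set X}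
    (hV : IsOpen V) (x : X) : frontier (connectedComponentIn V x) ⊆ Vᶜ := by
  intro y hy hyV
  rw [hV.connectedComponentIn.frontier_eq] at hy
  obtain ⟨c, hcy, hcx⟩ := mem_closure_iff.1 hy.1 _ hV.connectedComponentIn
    (mem_connectedComponentIn hyV)
  apply hy.2
  rw [connectedComponentIn_eq hcx, ← connectedComponentIn_eq hcy]
  exact mem_connectedComponentIn hyV

end Topology

section ComplexAnalysis

lemma norm_le_of_frontier_of_eventually_cobounded {E F : Type*} [NormedAddCommGroup E]
    [NormedSpace ℂ E] [Nontrivial E] [NormedAddCommGroup F] [NormedSpace ℂ F] {h : E → F}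
    {U : Set E} {C : ℝ} (hU : IsOpen U) (hd : DiffContOnCl ℂ h U)
    (hfr : ∀ x ∈ frontier U, ‖h x‖ ≤ C) (hinf : ∀ᶠ x in cobounded E ⊓ 𝓟 U, ‖h x‖ ≤ C)
    {z : E} (hz : z ∈ U) : ‖h z‖ ≤ C := by
  rw [eventually_inf_principal] at hinf
  obtain ⟨R, -, hR⟩ := hasBasis_cobounded_norm.eventually_iff.1 hinf
  obtain ⟨R', hRR', hzR'⟩ : ∃ R', R ≤ R' ∧ ‖z‖ < R' :=
    ⟨max R (‖z‖ + 1), le_max_left _ _, (lt_add_one _).trans_le (le_max_right _ _)⟩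
  have hzB : z ∈ U ∩ Metric.ball 0 R' := ⟨hz, mem_ball_zero_iff.2 hzR'⟩
  refine Complex.norm_le_of_forall_mem_frontier_norm_le
    (Metric.isBounded_ball.subset inter_subset_right) (hd.mono inter_subset_left) ?_
    (subset_closure hzB)
  intro x hx
  rw [(hU.inter Metric.isOpen_ball).frontier_eq] at hx
  have hxcl : x ∈ closure U := closure_mono inter_subset_left hx.1
  by_cases hxU : x ∈ U
  · have hxR' : R' ≤ ‖x‖ := by
      by_contra! hlt
      exact hx.2 ⟨hxU, mem_ball_zero_iff.2 hlt⟩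
    exact hR (hRR'.trans hxR') hxU
  · exact hfr x (hU.frontier_eq ▸ ⟨hxcl, hxU⟩)

/-- The Noshiro–Warschawski criterion. -/
lemma injOn_of_convex_of_re_deriv_pos {S : Set ℂ} {f f' : ℂ → ℂ} (hS : Convex ℝ S)
    (hf : ∀ z ∈ S, HasDerivAt f (f' z) z) (hf' : ∀ z ∈ S, 0 < (f' z).re) : InjOn f S := by
  intro z hz w hw hfzw
  by_contra hne
  have hd : w - z ≠ 0 := sub_ne_zero.2 (Ne.symm hne)
  let φ : ℝ → ℝ := fun t ↦ (f (AffineMap.lineMap z w t) / (w - z)).re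
  have hderiv : ∀ t ∈ Icc (0 : ℝ) 1, HasDerivAt φ (f' (AffineMap.lineMap z w t)).re t := by
    intro t ht
    have h := ((hf _ (hS.lineMap_mem hz hw ht)).scomp t AffineMap.hasDerivAt_lineMap).div_const
      (w - z)
    rw [smul_eq_mul, mul_div_cancel_left₀ _ hd] at h
    exact Complex.reCLM.hasFDerivAt.comp_hasDerivAt t h
  have hmono : StrictMonoOn φ (Icc 0 1) := by
    refine strictMonoOn_of_deriv_pos (convex_Icc 0 1)
      (fun t ht ↦ (hderiv t ht).continuousAt.continuousWithinAt) fun t ht ↦ ?_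
    have ht' := interior_subset ht
    rw [(hderiv t ht').deriv]
    exact hf' _ (hS.lineMap_mem hz hw ht')
  have hlt := hmono (left_mem_Icc.2 zero_le_one) (right_mem_Icc.2 zero_le_one) one_pos
  simp [φ, hfzw] at hlt

lemma injOn_exp_of_isPreconnected_of_im_ne_zero {S : Set ℂ} (hS : IsPreconnected S)
    (him : ∀ z ∈ S, (Complex.exp z).im ≠ 0) : InjOn Complex.exp S := by
  intro z hz w hw hexp
  obtain ⟨n, rfl⟩ := Complex.exp_eq_exp_iff_exists_int.1 hexp
  have hIm : (w + n * (2 * Real.pi * Complex.I)).im = w.im + 2 * Real.pi * n := by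
    simp [mul_comm]
  have hord : (Complex.im '' S).OrdConnected :=
    (hS.image _ Complex.continuous_im.continuousOn).ordConnected
  have hsin : ∀ t ∈ Complex.im '' S, Real.sin t ≠ 0 := by
    rintro _ ⟨x, hx, rfl⟩ h0
    exact him x hx (by rw [Complex.exp_im, h0, mul_zero])
  -- Two points of `S` differing by `2πin ≠ 0` would force `S` to meet both half-planes under `exp`,
  -- since `sin` changes sign under a translation by `π`.
  have hturn : ∀ t, w.im + t ∈ uIcc w.im (w.im + 2 * Real.pi * n) →
      0 < Real.sin w.im * Real.sin (w.im + t) := by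
    intro t ht
    have hsub := hord.uIcc_subset (mem_image_of_mem _ hw) (mem_image_of_mem _ hz)
    rw [hIm] at hsub
    exact mul_pos_of_isPreconnected_of_ne_zero isPreconnected_uIcc Real.continuous_sin.continuousOn
      (fun t ht ↦ hsin t (hsub ht)) left_mem_uIcc ht
  have hsq := mul_self_nonneg (Real.sin w.im)
  rcases lt_trichotomy n 0 with hn | rfl | hn
  · have hn' : (n : ℝ) ≤ -1 := by exact_mod_cast Int.le_sub_one_of_lt hn
    have := hturn (-Real.pi) (mem_uIcc.2 (.inr ⟨by nlinarith [Real.pi_pos], by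
      linarith [Real.pi_pos]⟩))
    rw [← sub_eq_add_neg, Real.sin_sub_pi] at this
    linarith
  · simp
  · have hn' : (1 : ℝ) ≤ n := by exact_mod_cast hn
    have := hturn Real.pi (mem_uIcc.2 (.inl ⟨by linarith [Real.pi_pos], by
      nlinarith [Real.pi_pos]⟩))
    rw [Real.sin_add_pi] at this
    linarith

end ComplexAnalysis

section PseudoHyperbolicDistance

variable {z w a b : ℂ} {l : ℝ}

lemma norm_sub_conj_sq (z w : ℂ) : ‖z - conj w‖ ^ 2 = ‖z - w‖ ^ 2 + 4 * (z.im * w.im) := by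
  simp only [Complex.sq_norm, Complex.normSq_apply, Complex.sub_re, Complex.sub_im,
    Complex.conj_re, Complex.conj_im]
  ring

lemma norm_sub_le_norm_sub_conj (h : 0 ≤ z.im * w.im) : ‖z - w‖ ≤ ‖z - conj w‖ := by
  have := norm_sub_conj_sq z w
  exact le_of_sq_le_sq (by linarith) (norm_nonneg _)

lemma sub_conj_ne_zero (h : 0 < z.im * w.im) : z - conj w ≠ 0 := by
  intro h0
  have := norm_sub_conj_sq z w
  rw [h0, norm_zero] at this
  nlinarith [sq_nonneg ‖z - w‖]

lemma norm_add_conj_lt_norm_add (h : 0 < a.im * b.im) : ‖a + conj b‖ < ‖a + b‖ := by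
  have := norm_sub_conj_sq a (-b)
  simp only [map_neg, sub_neg_eq_add, Complex.neg_im, mul_neg] at this
  exact lt_of_pow_lt_pow_left₀ 2 (norm_nonneg _) (by linarith)

/-- The pseudo-hyperbolic distance `|z - w| / |z - w̄|` of the upper (or the lower) half-plane. It
is meant for points on the same side of the real line; for `z = w̄` it has the junk value `0`. -/
noncomputable def pseudoHyperbolicDist (z w : ℂ) : ℝ := ‖z - w‖ / ‖z - conj w‖

lemma pseudoHyperbolicDist_nonneg (z w : ℂ) : 0 ≤ pseudoHyperbolicDist z w := by
  unfold pseudoHyperbolicDist; positivity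

lemma pseudoHyperbolicDist_le_one (h : 0 ≤ z.im * w.im) : pseudoHyperbolicDist z w ≤ 1 :=
  div_le_one_of_le₀ (norm_sub_le_norm_sub_conj h) (norm_nonneg _)

lemma pseudoHyperbolicDist_eq_one (hz : z.im = 0) (hw : w.im ≠ 0) :
    pseudoHyperbolicDist z w = 1 := by
  have hne : z - w ≠ 0 := fun h ↦ hw (by rw [← sub_eq_zero.1 h, hz])
  have heq : ‖z - w‖ = ‖z - conj w‖ := by
    have := norm_sub_conj_sq z w
    rw [hz, zero_mul, mul_zero, add_zero] at this
    exact ((sq_eq_sq₀ (norm_nonneg _) (norm_nonneg _)).1 this).symm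
  rw [pseudoHyperbolicDist, ← heq, div_self (norm_ne_zero_iff.2 hne)]

lemma eq_of_pseudoHyperbolicDist_eq_zero (h : 0 < z.im * w.im)
    (h0 : pseudoHyperbolicDist z w = 0) : z = w := by
  have := (div_eq_zero_iff.1 h0).resolve_right (norm_ne_zero_iff.2 (sub_conj_ne_zero h))
  exact sub_eq_zero.1 (norm_eq_zero.1 this)

lemma tendsto_pseudoHyperbolicDist_cobounded (w : ℂ) :
    Tendsto (pseudoHyperbolicDist · w) (cobounded ℂ) (𝓝 1) := by
  have hinv : Tendsto (fun z ↦ (z - conj w)⁻¹) (cobounded ℂ) (𝓝 0) :=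
    tendsto_inv₀_cobounded.comp (tendsto_sub_const_cobounded (conj w))
  have hlim : Tendsto (fun z ↦ ‖1 + (conj w - w) * (z - conj w)⁻¹‖) (cobounded ℂ) (𝓝 1) := by
    simpa using ((hinv.const_mul (conj w - w)).const_add 1).norm
  refine hlim.congr' ?_
  filter_upwards [eventually_ne_cobounded (conj w)] with z hz
  rw [pseudoHyperbolicDist, ← norm_div]
  have := sub_ne_zero.2 hz
  congr 1
  field_simp
  ring

lemma pseudoHyperbolicDist_le_mul_sq (hl : ‖a + conj b‖ ≤ l * ‖a + b‖)
    (h : 0 < a.im * b.im) (h' : 0 < (a ^ 2).im * (b ^ 2).im) :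
    pseudoHyperbolicDist a b ≤ l * pseudoHyperbolicDist (a ^ 2) (b ^ 2) := by
  have hsub := norm_pos_iff.2 (sub_conj_ne_zero h)
  have hsq : a ^ 2 - conj (b ^ 2) = (a - conj b) * (a + conj b) := by rw [map_pow]; ring
  have hadd : 0 < ‖a + conj b‖ :=
    norm_pos_iff.2 (right_ne_zero_of_mul (hsq ▸ sub_conj_ne_zero h'))
  have hfac : pseudoHyperbolicDist (a ^ 2) (b ^ 2) =
      pseudoHyperbolicDist a b * (‖a + b‖ / ‖a + conj b‖) := by
    rw [pseudoHyperbolicDist, pseudoHyperbolicDist, hsq, sq_sub_sq, norm_mul, norm_mul]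
    field_simp
  calc pseudoHyperbolicDist a b
      ≤ pseudoHyperbolicDist a b * (l * ‖a + b‖ / ‖a + conj b‖) :=
        le_mul_of_one_le_right (pseudoHyperbolicDist_nonneg a b) ((one_le_div hadd).2 hl)
    _ = l * pseudoHyperbolicDist (a ^ 2) (b ^ 2) := by rw [hfac]; ring

end PseudoHyperbolicDistance

section ReverseSchwarzPick

variable {F : ℂ → ℂ} {U : Set ℂ} {w : ℂ}

/-- The function `x ↦ (F x - conj (F w)) (x - w) / ((F x - F w) (x - conj w))` with the singularity
at `w` removed. Its modulus is the ratio of the pseudo-hyperbolic distances of `x, w` and of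
`F x, F w`, to which the maximum principle can therefore be applied. -/
noncomputable def schwarzPickQuotient (F : ℂ → ℂ) (w x : ℂ) : ℂ :=
  (F x - conj (F w)) / (dslope F w x * (x - conj w))

lemma norm_schwarzPickQuotient (F : ℂ → ℂ) {x : ℂ} (hx : x ≠ w) :
    ‖schwarzPickQuotient F w x‖ =
      pseudoHyperbolicDist x w / pseudoHyperbolicDist (F x) (F w) := by
  rw [schwarzPickQuotient, dslope_of_ne F hx, slope_def_field, norm_div, norm_mul, norm_div,
    pseudoHyperbolicDist, pseudoHyperbolicDist]
  simp only [div_eq_mul_inv, mul_inv, inv_inv]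
  ring

lemma differentiableOn_schwarzPickQuotient {S : Set ℂ} (hF : Differentiable ℂ F)
    (hside : ∀ x ∈ S, x ≠ conj w) (hinj : ∀ x ∈ S, x ≠ w → F x ≠ F w) (hw : deriv F w ≠ 0) :
    DifferentiableOn ℂ (schwarzPickQuotient F w) S := by
  have hslope : Differentiable ℂ (dslope F w) := by
    rw [← differentiableOn_univ, Complex.differentiableOn_dslope univ_mem]
    exact hF.differentiableOn
  refine (hF.sub_const _).differentiableOn.div
    (hslope.mul (differentiable_id.sub_const _)).differentiableOn fun x hx ↦ ?_
  refine mul_ne_zero ?_ (sub_ne_zero.2 (hside x hx))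
  rcases eq_or_ne x w with rfl | hxw
  · rwa [dslope_same]
  · rw [dslope_of_ne F hxw, slope_def_field]
    exact div_ne_zero (sub_ne_zero.2 (hinj x hx hxw)) (sub_ne_zero.2 hxw)

lemma eventually_norm_schwarzPickQuotient_le (hside : ∀ x ∈ U, 0 ≤ x.im * w.im)
    (hF : Tendsto F (cobounded ℂ ⊓ 𝓟 U) (cobounded ℂ)) {C : ℝ} (hC : 1 < C) :
    ∀ᶠ x in cobounded ℂ ⊓ 𝓟 U, ‖schwarzPickQuotient F w x‖ ≤ C := by
  have hC0 : 0 < C := one_pos.trans hC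
  have hdist := hF.eventually ((tendsto_pseudoHyperbolicDist_cobounded (F w)).eventually
    (eventually_gt_nhds (inv_lt_one_of_one_lt₀ hC)))
  filter_upwards [hdist, (eventually_ne_cobounded w).filter_mono inf_le_left,
    mem_inf_of_right (mem_principal_self U)] with x hx hxw hxU
  rw [norm_schwarzPickQuotient F hxw, div_le_iff₀ ((inv_pos.2 hC0).trans hx)]
  calc pseudoHyperbolicDist x w ≤ 1 := pseudoHyperbolicDist_le_one (hside x hxU)
    _ = C * C⁻¹ := (mul_inv_cancel₀ hC0.ne').symm
    _ ≤ C * pseudoHyperbolicDist (F x) (F w) := by gcongr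

lemma norm_schwarzPickQuotient_le_one (hU : IsOpen U) (hside : ∀ x ∈ U, 0 ≤ x.im * w.im)
    (hF : Differentiable ℂ F) (hinj : InjOn F U) (hdw : deriv F w ≠ 0)
    (hfr : ∀ x ∈ frontier U, (F x).im = 0)
    (hinf : Tendsto F (cobounded ℂ ⊓ 𝓟 U) (cobounded ℂ)) (hw : w ∈ U) (hFw : (F w).im ≠ 0)
    (hw0 : w.im ≠ 0) {z : ℂ} (hz : z ∈ U) : ‖schwarzPickQuotient F w z‖ ≤ 1 := by
  have hside' : ∀ x ∈ closure U, 0 ≤ x.im * w.im := fun x hx ↦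
    closure_minimal hside
      (isClosed_le continuous_const (Complex.continuous_im.mul continuous_const)) hx
  have hne : ∀ x ∈ frontier U, x ≠ w := fun x hx h ↦ (hU.frontier_eq ▸ hx).2 (h ▸ hw)
  have hdiff : DiffContOnCl ℂ (schwarzPickQuotient F w) U := by
    refine (differentiableOn_schwarzPickQuotient hF ?_ ?_ hdw).diffContOnCl
    · rintro _ hx rfl
      have := hside' _ hx
      rw [Complex.conj_im] at this
      nlinarith [mul_self_pos.2 hw0]
    · intro x hx hxw hFx
      by_cases hxU : x ∈ U
      · exact hxw (hinj hxU hw hFx)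
      · exact hFw (hFx ▸ hfr x (hU.frontier_eq ▸ ⟨hx, hxU⟩))
  refine le_of_forall_gt_imp_ge_of_dense fun C hC ↦ ?_
  refine norm_le_of_frontier_of_eventually_cobounded hU hdiff (fun x hx ↦ ?_)
    (eventually_norm_schwarzPickQuotient_le hside hinf hC) hz
  rw [norm_schwarzPickQuotient F (hne x hx), pseudoHyperbolicDist_eq_one (hfr x hx) hFw, div_one]
  exact (pseudoHyperbolicDist_le_one (hside' x (frontier_subset_closure hx))).trans hC.le

/-- The Schwarz–Pick inequality for the inverse of `F : U → F(U)`. -/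
lemma pseudoHyperbolicDist_le_of_injOn (hU : IsOpen U) (hside : ∀ x ∈ U, 0 ≤ x.im * w.im)
    (hF : Differentiable ℂ F) (hinj : InjOn F U) (hdw : deriv F w ≠ 0)
    (hfr : ∀ x ∈ frontier U, (F x).im = 0)
    (hinf : Tendsto F (cobounded ℂ ⊓ 𝓟 U) (cobounded ℂ)) (hw : w ∈ U) (hw0 : w.im ≠ 0)
    {z : ℂ} (hz : z ∈ U) (hFzw : 0 < (F z).im * (F w).im) :
    pseudoHyperbolicDist z w ≤ pseudoHyperbolicDist (F z) (F w) := by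
  rcases eq_or_ne z w with rfl | hzw
  · simp [pseudoHyperbolicDist]
  have hpos : 0 < pseudoHyperbolicDist (F z) (F w) :=
    (pseudoHyperbolicDist_nonneg _ _).lt_of_ne'
      fun h ↦ hzw (hinj hz hw (eq_of_pseudoHyperbolicDist_eq_zero hFzw h))
  rw [← div_le_one hpos, ← norm_schwarzPickQuotient F hzw]
  exact norm_schwarzPickQuotient_le_one hU hside hF hinj hdw hfr hinf hw
    (right_ne_zero_of_mul hFzw.ne') hw0 hz

end ReverseSchwarzPick

section Expanding

/-- The set of nonreal points with nonreal image under `F`. -/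
def nonrealLocus (F : ℂ → ℂ) : Set ℂ := {z | z.im ≠ 0 ∧ (F z).im ≠ 0}

/-- `F` does not decrease the pseudo-hyperbolic distance of two points lying in one connected
component of `nonrealLocus F`. -/
def IsPseudoHyperbolicExpanding (F : ℂ → ℂ) : Prop :=
  ∀ ⦃S : Set ℂ⦄, IsPreconnected S → S ⊆ nonrealLocus F → ∀ ⦃z⦄, z ∈ S → ∀ ⦃w⦄, w ∈ S →
    pseudoHyperbolicDist z w ≤ pseudoHyperbolicDist (F z) (F w)

variable {F : ℂ → ℂ} {S : Set ℂ} {z w : ℂ}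

lemma isOpen_nonrealLocus (hF : Continuous F) : IsOpen (nonrealLocus F) :=
  (isOpen_ne_fun Complex.continuous_im continuous_const).inter
    (isOpen_ne_fun (Complex.continuous_im.comp hF) continuous_const)

lemma im_mul_im_pos_of_isPreconnected (hS : IsPreconnected S) (hSF : S ⊆ nonrealLocus F)
    (hz : z ∈ S) (hw : w ∈ S) : 0 < z.im * w.im :=
  mul_pos_of_isPreconnected_of_ne_zero hS Complex.continuous_im.continuousOn
    (fun _ hx ↦ (hSF hx).1) hz hw

lemma im_map_mul_im_map_pos_of_isPreconnected (hF : Continuous F) (hS : IsPreconnected S)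
    (hSF : S ⊆ nonrealLocus F) (hz : z ∈ S) (hw : w ∈ S) : 0 < (F z).im * (F w).im :=
  mul_pos_of_isPreconnected_of_ne_zero hS (Complex.continuous_im.comp hF).continuousOn
    (fun _ hx ↦ (hSF hx).2) hz hw

lemma isPseudoHyperbolicExpanding_of_injOn (hF : Differentiable ℂ F)
    (hreal : ∀ z : ℂ, z.im = 0 → (F z).im = 0)
    (hinj : ∀ ⦃S⦄, IsPreconnected S → S ⊆ nonrealLocus F → InjOn F S)
    (hderiv : ∀ w ∈ nonrealLocus F, deriv F w ≠ 0)
    (hinf : Tendsto F (cobounded ℂ) (cobounded ℂ)) : IsPseudoHyperbolicExpanding F := by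
  intro S hS hSF z hz w hw
  have hopen := isOpen_nonrealLocus hF.continuous
  let U := connectedComponentIn (nonrealLocus F) w
  have hU : IsPreconnected U := isPreconnected_connectedComponentIn
  have hUF : U ⊆ nonrealLocus F := connectedComponentIn_subset _ _
  have hSU : S ⊆ U := hS.subset_connectedComponentIn hw hSF
  refine pseudoHyperbolicDist_le_of_injOn hopen.connectedComponentIn
    (fun x hx ↦ (im_mul_im_pos_of_isPreconnected hU hUF hx (hSU hw)).le) hF (hinj hU hUF)
    (hderiv w (hSF hw)) (fun x hx ↦ ?_) (hinf.mono_left inf_le_left) (hSU hw) (hSF hw).1 (hSU hz)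
    (im_map_mul_im_map_pos_of_isPreconnected hF.continuous hS hSF hz hw)
  by_contra hFx
  exact frontier_connectedComponentIn_subset_compl hopen w hx ⟨mt (hreal x) hFx, hFx⟩

lemma IsPseudoHyperbolicExpanding.of_tendstoLocallyUniformly {ι : Type*} {p : Filter ι} [p.NeBot]
    {F : ι → ℂ → ℂ} {g : ℂ → ℂ} (hF : ∀ n, Continuous (F n))
    (hexp : ∀ n, IsPseudoHyperbolicExpanding (F n)) (hlim : TendstoLocallyUniformly F g p) :
    IsPseudoHyperbolicExpanding g := by
  intro S hS hSg z hz w hw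
  have hg : Continuous g := hlim.continuous (.of_forall hF)
  let U := connectedComponentIn (nonrealLocus g) w
  have hSU : S ⊆ U := hS.subset_connectedComponentIn hw hSg
  have hU : IsPathConnected U :=
    (isOpen_nonrealLocus hg).connectedComponentIn.isConnected_iff_isPathConnected.1
      (isConnected_connectedComponentIn_iff.2 (hSg hw))
  obtain ⟨γ, hγ⟩ := hU.joinedIn z (hSU hz) w (hSU hw)
  have hγg : range γ ⊆ nonrealLocus g :=
    (range_subset_iff.2 hγ).trans (connectedComponentIn_subset _ _)
  have hγF : ∀ᶠ n in p, range γ ⊆ nonrealLocus (F n) := by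
    have hmaps : ∀ᶠ n in p, MapsTo (F n) (range γ) {y | y.im ≠ 0} :=
      (ContinuousMap.tendsto_iff_tendstoLocallyUniformly (F := fun n ↦ ⟨F n, hF n⟩)
        (f := ⟨g, hg⟩)).2 hlim |>.eventually <| ContinuousMap.eventually_mapsTo
          (isCompact_range γ.continuous) (isOpen_ne_fun Complex.continuous_im continuous_const)
          fun x hx ↦ (hγg hx).2
    filter_upwards [hmaps] with n hn x hx using ⟨(hγg hx).1, hn hx⟩
  have hdist : Tendsto (fun n ↦ pseudoHyperbolicDist (F n z) (F n w)) p
      (𝓝 (pseudoHyperbolicDist (g z) (g w))) := by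
    have hFz := hlim.tendstoLocallyUniformlyOn.tendsto_at (mem_univ z)
    have hFw := hlim.tendstoLocallyUniformlyOn.tendsto_at (mem_univ w)
    refine (hFz.sub hFw).norm.div
      (hFz.sub ((Complex.continuous_conj.tendsto _).comp hFw)).norm (norm_ne_zero_iff.2 ?_)
    exact sub_conj_ne_zero (im_map_mul_im_map_pos_of_isPreconnected hg hS hSg hz hw)
  refine ge_of_tendsto hdist ?_
  filter_upwards [hγF] with n hn
  exact hexp n (isPreconnected_range γ.continuous) hn ⟨0, γ.source⟩ ⟨1, γ.target⟩

end Expanding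

section RealRootedPolynomials

variable {ι : Type*} {a : ι → ℝ} {s : Finset ι} {z w : ℂ}

/-- The real-rooted polynomial `∏_{i ∈ s} (1 + aᵢ z)`. -/
def linearFactorProd (a : ι → ℝ) (s : Finset ι) (z : ℂ) : ℂ := ∏ i ∈ s, (1 + a i * z)

/-- A holomorphic logarithm of `linearFactorProd a s` on the upper and on the lower half-plane. -/
noncomputable def linearFactorLog (a : ι → ℝ) (s : Finset ι) (z : ℂ) : ℂ :=
  ∑ i ∈ s, Complex.log (1 + a i * z)

lemma one_add_ofReal_mul_mem_slitPlane (r : ℝ) (hz : z.im ≠ 0) :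
    1 + r * z ∈ Complex.slitPlane := by
  rcases eq_or_ne r 0 with rfl | hr
  · simp
  · exact .inr (by simp [hr, hz])

lemma exp_linearFactorLog (a : ι → ℝ) (s : Finset ι) (hz : z.im ≠ 0) :
    Complex.exp (linearFactorLog a s z) = linearFactorProd a s z := by
  rw [linearFactorLog, Complex.exp_sum]
  exact Finset.prod_congr rfl fun i _ ↦
    Complex.exp_log (Complex.slitPlane_ne_zero (one_add_ofReal_mul_mem_slitPlane _ hz))

lemma hasDerivAt_linearFactorLog (a : ι → ℝ) (s : Finset ι) (hz : z.im ≠ 0) :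
    HasDerivAt (linearFactorLog a s) (∑ i ∈ s, a i / (1 + a i * z)) z := by
  refine HasDerivAt.fun_sum fun i _ ↦ HasDerivAt.clog ?_ (one_add_ofReal_mul_mem_slitPlane _ hz)
  simpa using ((hasDerivAt_id z).const_mul (a i : ℂ)).const_add 1

lemma differentiable_linearFactorProd (a : ι → ℝ) (s : Finset ι) :
    Differentiable ℂ (linearFactorProd a s) := by
  unfold linearFactorProd; fun_prop

lemma im_linearFactorProd_eq_zero (a : ι → ℝ) (s : Finset ι) (hz : z.im = 0) :
    (linearFactorProd a s z).im = 0 := by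
  lift z to ℝ using hz
  rw [← Complex.conj_eq_iff_im]
  simp [linearFactorProd]

lemma exists_ne_zero_of_im_linearFactorProd_ne_zero (h : (linearFactorProd a s z).im ≠ 0) :
    ∃ i ∈ s, a i ≠ 0 := by
  contrapose! h
  rw [linearFactorProd, Finset.prod_eq_one fun i hi ↦ by simp [h i hi], Complex.one_im]

lemma re_deriv_linearFactorLog_pos (ha : ∃ i ∈ s, a i ≠ 0) (hzw : 0 < z.im * w.im) :
    0 < (Complex.I * w.im * ∑ i ∈ s, a i / (1 + a i * z)).re := by
  have hterm : ∀ r : ℝ, (Complex.I * w.im * (r / (1 + r * z))).re =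
      r ^ 2 * (z.im * w.im) / Complex.normSq (1 + r * z) := by
    intro r
    simp only [Complex.mul_re, Complex.mul_im, Complex.div_re, Complex.div_im, Complex.add_re,
      Complex.add_im, Complex.one_re, Complex.one_im, Complex.I_re, Complex.I_im,
      Complex.ofReal_re, Complex.ofReal_im]
    ring
  obtain ⟨i, hi, hai⟩ := ha
  rw [Finset.mul_sum, Complex.re_sum]
  refine Finset.sum_pos' (fun j _ ↦ ?_) ⟨i, hi, ?_⟩
  · rw [hterm]
    have := Complex.normSq_nonneg (1 + a j * z)
    positivity
  · rw [hterm]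
    have := Complex.normSq_pos.2 (Complex.slitPlane_ne_zero
      (one_add_ofReal_mul_mem_slitPlane (a i) (left_ne_zero_of_mul hzw.ne')))
    positivity

lemma injOn_linearFactorLog (ha : ∃ i ∈ s, a i ≠ 0) (w : ℂ) :
    InjOn (linearFactorLog a s) {z | 0 < z.im * w.im} := by
  have hconv : Convex ℝ {z : ℂ | 0 < z.im * w.im} :=
    convex_halfSpace_gt ((Complex.imLm).smulRight w.im).isLinear 0
  have h := injOn_of_convex_of_re_deriv_pos hconv
    (fun z hz ↦ (hasDerivAt_linearFactorLog a s (left_ne_zero_of_mul (ne_of_gt hz))).const_mul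
      (Complex.I * w.im))
    (fun z hz ↦ re_deriv_linearFactorLog_pos ha hz)
  exact fun x hx y hy hxy ↦ h hx hy (congrArg _ hxy)

lemma injOn_linearFactorProd {S : Set ℂ} (hS : IsPreconnected S)
    (hSP : S ⊆ nonrealLocus (linearFactorProd a s)) : InjOn (linearFactorProd a s) S := by
  rcases S.eq_empty_or_nonempty with rfl | ⟨w, hw⟩
  · exact injOn_empty _
  have hexp : ∀ z ∈ S, Complex.exp (linearFactorLog a s z) = linearFactorProd a s z :=
    fun z hz ↦ exp_linearFactorLog a s (hSP hz).1
  have hlog : InjOn (linearFactorLog a s) S :=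
    (injOn_linearFactorLog (exists_ne_zero_of_im_linearFactorProd_ne_zero (hSP hw).2) w).mono
      fun z hz ↦ im_mul_im_pos_of_isPreconnected hS hSP hz hw
  have hcont : ContinuousOn (linearFactorLog a s) S := fun z hz ↦
    (hasDerivAt_linearFactorLog a s (hSP hz).1).continuousAt.continuousWithinAt
  refine InjOn.congr (f₁ := Complex.exp ∘ linearFactorLog a s) ?_ hexp
  refine (injOn_exp_of_isPreconnected_of_im_ne_zero (hS.image _ hcont) ?_).comp hlog
    (mapsTo_image _ S)
  rintro _ ⟨z, hz, rfl⟩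
  rw [hexp z hz]
  exact (hSP hz).2

lemma deriv_linearFactorProd_ne_zero (hw : w ∈ nonrealLocus (linearFactorProd a s)) :
    deriv (linearFactorProd a s) w ≠ 0 := by
  have heq : linearFactorProd a s =ᶠ[𝓝 w] fun z ↦ Complex.exp (linearFactorLog a s z) := by
    filter_upwards [Complex.continuous_im.continuousAt.eventually_ne hw.1] with z hz
    exact (exp_linearFactorLog a s hz).symm
  rw [((hasDerivAt_linearFactorLog a s hw.1).cexp.congr_of_eventuallyEq heq).deriv]
  refine mul_ne_zero (Complex.exp_ne_zero _) fun h ↦ ?_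
  have := re_deriv_linearFactorLog_pos (exists_ne_zero_of_im_linearFactorProd_ne_zero hw.2)
    (mul_self_pos.2 hw.1)
  simp [h] at this

lemma tendsto_linearFactorProd_cobounded (ha : ∃ i ∈ s, a i ≠ 0) :
    Tendsto (linearFactorProd a s) (cobounded ℂ) (cobounded ℂ) := by
  let p : Polynomial ℂ := ∏ i ∈ s, (1 + .C (a i : ℂ) * .X)
  have heval : ∀ z, linearFactorProd a s z = p.eval z := fun z ↦ by
    simp [p, linearFactorProd, Polynomial.eval_prod]
  obtain ⟨i, hi, hai⟩ := ha
  have hroot : p.eval (-(a i : ℂ)⁻¹) = 0 := by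
    rw [← heval]
    exact Finset.prod_eq_zero hi (by simp [hai])
  have hdeg : 0 < p.degree := by
    refine Polynomial.degree_pos_of_root (fun hp ↦ ?_) hroot
    have := heval 0
    simp [hp, linearFactorProd] at this
  rw [funext heval, ← tendsto_norm_atTop_iff_cobounded]
  exact p.tendsto_norm_atTop hdeg tendsto_norm_cobounded_atTop

lemma isPseudoHyperbolicExpanding_linearFactorProd (a : ι → ℝ) (s : Finset ι) :
    IsPseudoHyperbolicExpanding (linearFactorProd a s) := by
  by_cases ha : ∃ i ∈ s, a i ≠ 0
  · exact isPseudoHyperbolicExpanding_of_injOn (differentiable_linearFactorProd a s)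
      (fun z ↦ im_linearFactorProd_eq_zero a s) (fun S ↦ injOn_linearFactorProd)
      (fun w ↦ deriv_linearFactorProd_ne_zero) (tendsto_linearFactorProd_cobounded ha)
  · intro S _ hSP z hz
    exact absurd (exists_ne_zero_of_im_linearFactorProd_ne_zero (hSP hz).2) ha

end RealRootedPolynomials

section InfiniteProduct

variable {ι : Type*} {a : ι → ℝ}

lemma tendstoLocallyUniformly_linearFactorProd (ha : Summable a) :
    TendstoLocallyUniformly (linearFactorProd a) (fun z ↦ ∏' i, (1 + a i * z)) atTop := by
  rw [← tendstoLocallyUniformlyOn_univ]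
  refine hasProdLocallyUniformlyOn_of_forall_compact isOpen_univ fun K _ hK ↦ ?_
  obtain ⟨R, hR⟩ := hK.isBounded.exists_norm_le
  refine Summable.hasProdUniformlyOn_one_add hK (ha.norm.mul_right R)
    (.of_forall fun i z hz ↦ ?_) fun i ↦ by fun_prop
  rw [norm_mul, Complex.norm_real]
  gcongr
  exact hR z hz

lemma isPseudoHyperbolicExpanding_tprod (ha : Summable a) :
    IsPseudoHyperbolicExpanding fun z ↦ ∏' i, (1 + a i * z) :=
  .of_tendstoLocallyUniformly (fun s ↦ (differentiable_linearFactorProd a s).continuous)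
    (isPseudoHyperbolicExpanding_linearFactorProd a) (tendstoLocallyUniformly_linearFactorProd ha)

lemma ofReal_tprod_one_add_mul (ha : Summable a) (x : ℝ) :
    ((∏' i, (1 + a i * x) : ℝ) : ℂ) = ∏' i, (1 + a i * (x : ℂ)) := by
  have hmul : Multipliable fun i ↦ 1 + a i * x :=
    multipliable_one_add_of_summable (ha.mul_right x).norm
  simpa using hmul.map_tprod Complex.ofRealHom Complex.continuous_ofReal

lemma tprod_one_add_mul_sq (ha : Summable a) (z : ℂ) :
    ∏' i, (1 + a i * z) ^ 2 = (∏' i, (1 + a i * z)) ^ 2 := by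
  refine (multipliable_one_add_of_summable ?_).tprod_pow 2
  simpa using ha.norm.mul_right ‖z‖

lemma one_add_sum_le_prod_one_add {f : ι → ℝ} {s : Finset ι} (hf : ∀ i ∈ s, 0 ≤ f i) :
    1 + ∑ i ∈ s, f i ≤ ∏ i ∈ s, (1 + f i) := by
  classical
  induction s using Finset.induction_on with
  | empty => simp
  | insert i s hi ih =>
    rw [Finset.forall_mem_insert] at hf
    rw [Finset.sum_insert hi, Finset.prod_insert hi]
    nlinarith [ih hf.2, mul_nonneg hf.1 (Finset.sum_nonneg hf.2)]

lemma one_add_tsum_le_tprod_one_add {f : ι → ℝ} (hf : ∀ i, 0 ≤ f i) (hsum : Summable f) :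
    1 + ∑' i, f i ≤ ∏' i, (1 + f i) :=
  le_of_tendsto_of_tendsto' (hsum.hasSum.const_add 1)
    (multipliable_one_add_of_summable hsum.norm).hasProd
    fun _ ↦ one_add_sum_le_prod_one_add fun i _ ↦ hf i

end InfiniteProduct

section Dynamics

variable {f g : ℂ → ℂ} {z : ℂ}

lemma mem_boundedOrbitSet : z ∈ boundedOrbitSet f ↔ IsBounded (range fun n ↦ f^[n] z) := Iff.rfl

lemma iterate_mem_boundedOrbitSet (hz : z ∈ boundedOrbitSet f) (n : ℕ) :
    f^[n] z ∈ boundedOrbitSet f := by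
  refine (mem_boundedOrbitSet.1 hz).subset (range_subset_iff.2 fun m ↦ ?_)
  rw [← Function.iterate_add_apply]
  exact mem_range_self (f := fun k ↦ f^[k] z) (m + n)

lemma closure_orbit_subset_boundedOrbitSet (hf : Continuous f) (hz : z ∈ boundedOrbitSet f) :
    closure (range fun n ↦ f^[n] z) ⊆ boundedOrbitSet f := by
  have hmaps : ∀ m, MapsTo f^[m] (range fun n ↦ f^[n] z) (range fun n ↦ f^[n] z) := by
    rintro m _ ⟨n, rfl⟩
    exact ⟨m + n, Function.iterate_add_apply f m n z⟩
  exact fun y hy ↦ (mem_boundedOrbitSet.1 hz).closure.subset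
    (range_subset_iff.2 fun m ↦ (hmaps m).closure (hf.iterate m) hy)

lemma ofReal_notMem_boundedOrbitSet {u : ℝ → ℝ} {x ε : ℝ} (hε : 0 < ε)
    (hfu : ∀ y : ℝ, f y = u y) (hu : ∀ y, x ≤ y → y + ε ≤ u y) :
    (x : ℂ) ∉ boundedOrbitSet f := by
  have hiter : ∀ n : ℕ, f^[n] x = (u^[n] x : ℝ) := fun n ↦
    (Function.Semiconj.iterate_right (f := Complex.ofReal) (fun y ↦ (hfu y).symm) n x).symm
  have hgrow : ∀ n : ℕ, x + n * ε ≤ u^[n] x := by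
    intro n
    induction n with
    | zero => simp
    | succ n ih =>
      have hx : x ≤ u^[n] x := (le_add_of_nonneg_right (by positivity)).trans ih
      rw [Function.iterate_succ_apply', Nat.cast_succ]
      linarith [hu _ hx]
  intro hx
  obtain ⟨R, hR⟩ := (mem_boundedOrbitSet.1 hx).exists_norm_le
  obtain ⟨n, hn⟩ := exists_nat_gt ((R - x) / ε)
  have hle : u^[n] x ≤ R := by
    have := (Complex.re_le_norm _).trans (hR (f^[n] x) ⟨n, rfl⟩)
    rwa [hiter, Complex.ofReal_re] at this
  linarith [hgrow n, (div_lt_iff₀ hε).1 hn]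

lemma boundedOrbitSet_sq_subset_nonrealLocus (hreal : ∀ z : ℂ, z.im = 0 → (g z).im = 0)
    (hesc : ∀ x : ℝ, 0 ≤ x → (x : ℂ) ∉ boundedOrbitSet fun z ↦ g z ^ 2) :
    boundedOrbitSet (fun z ↦ g z ^ 2) ⊆ nonrealLocus g := by
  intro z hz
  have hgz : (g z).im ≠ 0 := by
    intro him
    refine hesc _ (sq_nonneg (g z).re) ?_
    have hgz : g z = (g z).re := Complex.ext rfl him
    rw [Complex.ofReal_pow, ← hgz]
    exact iterate_mem_boundedOrbitSet hz 1
  exact ⟨mt (hreal z) hgz, hgz⟩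

lemma exists_norm_add_conj_le_mul_norm_add {A B : Set ℂ} (hA : IsCompact A) (hB : IsCompact B)
    (hA0 : ∀ a ∈ A, a.im ≠ 0) (hB0 : ∀ b ∈ B, b.im ≠ 0) :
    ∃ l : ℝ, 0 ≤ l ∧ l < 1 ∧
      ∀ a ∈ A, ∀ b ∈ B, 0 < a.im * b.im → ‖a + conj b‖ ≤ l * ‖a + b‖ := by
  let C : Set (ℂ × ℂ) := (A ×ˢ B) ∩ {p | 0 ≤ p.1.im * p.2.im}
  have hC : IsCompact C := (hA.prod hB).inter_right
    (isClosed_le continuous_const (by fun_prop))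
  have hlt : ∀ p ∈ C, ‖p.1 + conj p.2‖ < ‖p.1 + p.2‖ := fun p hp ↦
    norm_add_conj_lt_norm_add
      (lt_of_le_of_ne hp.2 (mul_ne_zero (hA0 _ hp.1.1) (hB0 _ hp.1.2)).symm)
  have hpos : ∀ p ∈ C, 0 < ‖p.1 + p.2‖ := fun p hp ↦ (norm_nonneg _).trans_lt (hlt p hp)
  have hcont : ContinuousOn (fun p : ℂ × ℂ ↦ ‖p.1 + conj p.2‖ / ‖p.1 + p.2‖) C :=
    ContinuousOn.div (by fun_prop) (by fun_prop) fun p hp ↦ (hpos p hp).ne'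
  rcases C.eq_empty_or_nonempty with hempty | hne
  · exact ⟨0, le_rfl, one_pos, fun a ha b hb hab ↦
      absurd (show (a, b) ∈ C from ⟨⟨ha, hb⟩, hab.le⟩) (hempty ▸ notMem_empty _)⟩
  obtain ⟨p, hp, hmax⟩ := hC.exists_isMaxOn hne hcont
  refine ⟨_, by positivity, (div_lt_one (hpos p hp)).2 (hlt p hp), fun a ha b hb hab ↦ ?_⟩
  have hab' : (a, b) ∈ C := ⟨⟨ha, hb⟩, hab.le⟩
  exact (div_le_iff₀ (hpos _ hab')).1 (hmax hab')

lemma nonpos_of_le_mul_succ {d : ℕ → ℝ} {l C : ℝ} (hl0 : 0 ≤ l) (hl1 : l < 1)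
    (hd : ∀ n, d n ≤ l * d (n + 1)) (hC : ∀ n, d n ≤ C) : d 0 ≤ 0 := by
  have hpow : ∀ n, d 0 ≤ l ^ n * d n := by
    intro n
    induction n with
    | zero => simp
    | succ n ih =>
      calc d 0 ≤ l ^ n * d n := ih
        _ ≤ l ^ n * (l * d (n + 1)) := by gcongr; exact hd n
        _ = l ^ (n + 1) * d (n + 1) := by ring
  have hlim : Tendsto (fun n : ℕ ↦ l ^ n * C) atTop (𝓝 0) := by
    simpa using (tendsto_pow_atTop_nhds_zero_of_lt_one hl0 hl1).mul_const C
  refine ge_of_tendsto' hlim fun n ↦ (hpow n).trans ?_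
  gcongr
  exact hC n

lemma IsPseudoHyperbolicExpanding.exists_le_mul_sq (hg : Continuous g)
    (hexp : IsPseudoHyperbolicExpanding g) {A B : Set ℂ} (hA : IsCompact A) (hB : IsCompact B)
    (hAg : A ⊆ nonrealLocus g) (hBg : B ⊆ nonrealLocus g) :
    ∃ l : ℝ, 0 ≤ l ∧ l < 1 ∧ ∀ ⦃S : Set ℂ⦄, IsPreconnected S → S ⊆ nonrealLocus g →
      ∀ z ∈ S ∩ A, ∀ w ∈ S ∩ B, 0 < (g z ^ 2).im * (g w ^ 2).im →
        pseudoHyperbolicDist z w ≤ l * pseudoHyperbolicDist (g z ^ 2) (g w ^ 2) := by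
  obtain ⟨l, hl0, hl1, hl⟩ := exists_norm_add_conj_le_mul_norm_add (hA.image hg) (hB.image hg)
    (forall_mem_image.2 fun _ hx ↦ (hAg hx).2) (forall_mem_image.2 fun _ hx ↦ (hBg hx).2)
  refine ⟨l, hl0, hl1, fun S hS hSg z hz w hw hzw ↦ ?_⟩
  have hgzw := im_map_mul_im_map_pos_of_isPreconnected hg hS hSg hz.1 hw.1
  have hlzw := hl _ (mem_image_of_mem g hz.2) _ (mem_image_of_mem g hw.2) hgzw
  exact (hexp hS hSg hz.1 hw.1).trans (pseudoHyperbolicDist_le_mul_sq hlzw hgzw hzw)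

lemma isTotallyDisconnected_boundedOrbitSet_sq (hg : Continuous g)
    (hreal : ∀ z : ℂ, z.im = 0 → (g z).im = 0) (hexp : IsPseudoHyperbolicExpanding g)
    (hesc : ∀ x : ℝ, 0 ≤ x → (x : ℂ) ∉ boundedOrbitSet fun z ↦ g z ^ 2) :
    IsTotallyDisconnected (boundedOrbitSet fun z ↦ g z ^ 2) := by
  let f : ℂ → ℂ := fun z ↦ g z ^ 2
  have hf : Continuous f := hg.pow 2
  have hKg : boundedOrbitSet f ⊆ nonrealLocus g :=
    boundedOrbitSet_sq_subset_nonrealLocus hreal hesc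
  intro S hSK hS z hz w hw
  have hSn : ∀ n, IsPreconnected (f^[n] '' S) := fun n ↦ hS.image _ (hf.iterate n).continuousOn
  have hSng : ∀ n, f^[n] '' S ⊆ nonrealLocus g := fun n ↦
    image_subset_iff.2 fun x hx ↦ hKg (iterate_mem_boundedOrbitSet (hSK hx) n)
  have hside : ∀ n, 0 < (f^[n] z).im * (f^[n] w).im := fun n ↦
    im_mul_im_pos_of_isPreconnected (hSn n) (hSng n) (mem_image_of_mem _ hz) (mem_image_of_mem _ hw)
  let orbitClosure (x : ℂ) : Set ℂ := closure (range fun n ↦ f^[n] x)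
  have horbit : ∀ x n, f^[n] x ∈ orbitClosure x := fun x n ↦ subset_closure (mem_range_self n)
  have hcompact : ∀ x ∈ S, IsCompact (orbitClosure x) := fun x hx ↦
    (mem_boundedOrbitSet.1 (hSK hx)).isCompact_closure
  have horbitg : ∀ x ∈ S, orbitClosure x ⊆ nonrealLocus g := fun x hx ↦
    (closure_orbit_subset_boundedOrbitSet hf (hSK hx)).trans hKg
  obtain ⟨l, hl0, hl1, hl⟩ := hexp.exists_le_mul_sq hg (hcompact z hz) (hcompact w hw)
    (horbitg z hz) (horbitg w hw)
  have hstep : ∀ n, pseudoHyperbolicDist (f^[n] z) (f^[n] w) ≤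
      l * pseudoHyperbolicDist (f^[n + 1] z) (f^[n + 1] w) := by
    intro n
    have hside' := hside (n + 1)
    rw [Function.iterate_succ_apply', Function.iterate_succ_apply'] at hside' ⊢
    exact hl (hSn n) (hSng n) _ ⟨mem_image_of_mem _ hz, horbit z n⟩ _
      ⟨mem_image_of_mem _ hw, horbit w n⟩ hside'
  have h0 := nonpos_of_le_mul_succ hl0 hl1 hstep
    fun n ↦ pseudoHyperbolicDist_le_one (hside n).le
  exact eq_of_pseudoHyperbolicDist_eq_zero (hside 0) (h0.antisymm (pseudoHyperbolicDist_nonneg _ _))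

end Dynamics

section InfiniteProductDynamics

variable {ι : Type*} {a : ι → ℝ} {f : ℂ → ℂ} {σ : ℝ}

lemma isTotallyDisconnected_boundedOrbitSet_tprod_sq (ha : Summable a)
    (hesc : ∀ x : ℝ, 0 ≤ x → (x : ℂ) ∉ boundedOrbitSet fun z ↦ (∏' i, (1 + a i * z)) ^ 2) :
    IsTotallyDisconnected (boundedOrbitSet fun z ↦ (∏' i, (1 + a i * z)) ^ 2) := by
  refine isTotallyDisconnected_boundedOrbitSet_sq ?_ (fun z hz ↦ ?_)
    (isPseudoHyperbolicExpanding_tprod ha) hesc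
  · exact (tendstoLocallyUniformly_linearFactorProd ha).continuous
      (.of_forall fun s ↦ (differentiable_linearFactorProd a s).continuous)
  · lift z to ℝ using hz
    rw [← ofReal_tprod_one_add_mul ha, Complex.ofReal_im]

lemma ofReal_notMem_boundedOrbitSet_tprod_sq (ha0 : ∀ i, 0 ≤ a i) (ha : HasSum a σ)
    (hσ : 1 / 4 < σ) {x : ℝ} (hx : 0 ≤ x) :
    (x : ℂ) ∉ boundedOrbitSet fun z ↦ (∏' i, (1 + a i * z)) ^ 2 := by
  have : 0 < σ := by linarith
  refine ofReal_notMem_boundedOrbitSet (u := fun y ↦ (∏' i, (1 + a i * y)) ^ 2)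
    (ε := (4 * σ - 1) / (4 * σ ^ 2)) (div_pos (by linarith) (by positivity))
    (fun y ↦ by rw [← ofReal_tprod_one_add_mul ha.summable, Complex.ofReal_pow]) fun y hxy ↦ ?_
  have hy : 0 ≤ y := hx.trans hxy
  have hprod : 1 + σ * y ≤ ∏' i, (1 + a i * y) := by
    rw [← (ha.mul_right y).tsum_eq]
    exact one_add_tsum_le_tprod_one_add (fun i ↦ mul_nonneg (ha0 i) hy) (ha.mul_right y).summable
  calc y + (4 * σ - 1) / (4 * σ ^ 2)
      = (1 + σ * y) ^ 2 - (σ * y + 1 - 1 / (2 * σ)) ^ 2 := by field_simp; ring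
    _ ≤ (1 + σ * y) ^ 2 := sub_le_self _ (sq_nonneg _)
    _ ≤ (∏' i, (1 + a i * y)) ^ 2 := by gcongr

/-- The bound `1 / 4` is sharp: the quadratic polynomial `(1 + z / 4) ^ 2` has a connected filled
Julia set, as its critical orbit converges to the fixed point `4`. -/
theorem Kf_totally_disconnected_infinite_product_general (ha0 : ∀ i, 0 ≤ a i) (ha : HasSum a σ)
    (hσ : 1 / 4 < σ) (hf : ∀ z : ℂ, f z = ∏' i, (1 + a i * z) ^ 2) :
    IsTotallyDisconnected (boundedOrbitSet f) := by
  rw [funext fun z ↦ (hf z).trans (tprod_one_add_mul_sq ha.summable z)]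
  exact isTotallyDisconnected_boundedOrbitSet_tprod_sq ha.summable fun x hx ↦
    ofReal_notMem_boundedOrbitSet_tprod_sq ha0 ha hσ hx

end InfiniteProductDynamics

/-- For `f(z) = ∏_{n=1}^∞ (1 + z/2ⁿ)²`, the set `K(f)` is totally disconnected. -/
theorem Kf_totally_disconnected_infinite_product (f : ℂ → ℂ)
    (hf : ∀ z : ℂ, f z = ∏' n : ℕ, (1 + z / 2 ^ (n + 1)) ^ 2) :
    IsTotallyDisconnected (boundedOrbitSet f) := by
  have ha : HasSum (fun n : ℕ ↦ (1 : ℝ) / 2 / 2 ^ n) 1 := hasSum_geometric_two' 1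
  refine Kf_totally_disconnected_infinite_product_general (fun n ↦ by positivity) ha (by norm_num)
    fun z ↦ (hf z).trans (tprod_congr fun n ↦ ?_)
  push_cast
  ring
end

section
/- Let f : ℂ → ℂ be Fatou's function f(z) = z + 1 + e^{-z}. Then K(f) is totally disconnected. -/
open Filter Topology

/-!
An orbit of `f(z) = z + 1 + e^{-z}` that enters the right half plane escapes to `+∞`, so `K(f)` lies
in `{Re z ≤ 0}`. It also avoids the lines `Im z = 2πk`, which `f` maps into the right half plane. A
connected subset of `K(f)` therefore stays in one open strip between consecutive such lines.
Reflecting such a strip through its centre `(2k + 1)πi` conjugates `f` to `g(u) = u - 1 + e^u` on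
`|Im u| < π`. There `g` is injective: it preserves the sign of `Im u`, and `Im g'` has constant sign
on each open half of the strip, while `g` is increasing on the real axis. Its image contains
`{Re w ≥ 0}`, as this half plane is connected, `g` is open on the strip and proper on its closure,
and `Re g < 0` on the boundary lines. Since `|g'| ≥ 2` wherever `Re g ≥ 0`, the inverse branch
contracts this convex half plane by the factor `1/2`. Thus `|fⁿ(z) - fⁿ(w)| ≥ 2ⁿ |z - w|`
for `z`, `w` in a common connected subset of `K(f)`, and boundedness of the orbits forces `z = w`.
-/

namespace FatouFunction

open Set Bornology
open scoped Real

section Expanding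

variable {X : Type*} {f : X → X} {K : Set X} {m : ℝ}

lemma pow_mul_dist_le_dist_iterate [PseudoMetricSpace X] (hm : 0 ≤ m) (hf : ContinuousOn f K)
    (hK : MapsTo f K K)
    (hexp : ∀ t ⊆ K, IsPreconnected t → ∀ x ∈ t, ∀ y ∈ t, m * dist x y ≤ dist (f x) (f y))
    (n : ℕ) {t : Set X} (htK : t ⊆ K) (ht : IsPreconnected t) {x y : X} (hx : x ∈ t) (hy : y ∈ t) :
    m ^ n * dist x y ≤ dist (f^[n] x) (f^[n] y) := by
  induction n generalizing t x y with
  | zero => simp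
  | succ n ih =>
    calc m ^ (n + 1) * dist x y = m ^ n * (m * dist x y) := by ring
      _ ≤ m ^ n * dist (f x) (f y) := by gcongr; exact hexp t htK ht x hx y hy
      _ ≤ dist (f^[n + 1] x) (f^[n + 1] y) :=
        ih ((hK.mono_left htK).image_subset) (ht.image f (hf.mono htK))
          (mem_image_of_mem f hx) (mem_image_of_mem f hy)

theorem isTotallyDisconnected_of_expanding [MetricSpace X] (hm : 1 < m) (hf : ContinuousOn f K)
    (hK : MapsTo f K K) (hbdd : ∀ x ∈ K, IsBounded (range fun n : ℕ => f^[n] x))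
    (hexp : ∀ t ⊆ K, IsPreconnected t → ∀ x ∈ t, ∀ y ∈ t, m * dist x y ≤ dist (f x) (f y)) :
    IsTotallyDisconnected K := by
  intro t htK ht x hx y hy
  obtain ⟨C, hC⟩ := Metric.isBounded_iff.1 ((hbdd x (htK hx)).union (hbdd y (htK hy)))
  have hle (n : ℕ) : m ^ n * dist x y ≤ C :=
    (pow_mul_dist_le_dist_iterate (by linarith) hf hK hexp n htK ht hx hy).trans
      (hC (.inl ⟨n, rfl⟩) (.inr ⟨n, rfl⟩))
  by_contra hxy
  have hlim : Tendsto (fun n : ℕ => m ^ n * dist x y) atTop atTop :=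
    (tendsto_pow_atTop_atTop_of_one_lt hm).atTop_mul_const (dist_pos.2 hxy)
  obtain ⟨n, hn⟩ := (hlim.eventually_gt_atTop C).exists
  exact hn.not_ge (hle n)

end Expanding

lemma floor_eq_floor_of_isPreconnected {R : Type*} [Ring R] [LinearOrder R] [IsStrictOrderedRing R]
    [FloorRing R] [TopologicalSpace R] [OrderClosedTopology R] {s : Set R} (hs : IsPreconnected s)
    (hint : ∀ k : ℤ, (k : R) ∉ s) {x y : R} (hx : x ∈ s) (hy : y ∈ s) : ⌊x⌋ = ⌊y⌋ := by
  wlog hxy : x ≤ y generalizing x y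
  · exact (this hy hx (le_of_not_ge hxy)).symm
  refine (Int.floor_mono hxy).eq_of_not_lt fun hlt => hint ⌊y⌋ ?_
  exact hs.Icc_subset hx hy ⟨(Int.floor_lt.1 hlt).le, Int.floor_le y⟩

lemma subset_image_of_isPreconnected {X Y : Type*} [TopologicalSpace X] [TopologicalSpace Y]
    {g : X → Y} {S : Set X} {H : Set Y} (hH : IsPreconnected H) (hopen : IsOpen (g '' S))
    (hclosed : IsClosed (g '' closure S)) (hdisj : Disjoint (g '' frontier S) H)
    (hne : (H ∩ g '' S).Nonempty) : H ⊆ g '' S := by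
  refine hH.subset_of_closure_inter_subset hopen hne ?_
  rintro w ⟨hw, hwH⟩
  have hw' : w ∈ g '' closure S := closure_minimal (image_mono subset_closure) hclosed hw
  rw [closure_eq_self_union_frontier, image_union] at hw'
  exact hw'.resolve_right fun h => hdisj.notMem_of_mem_left h hwH

lemma isClosed_image_of_norm_le_norm_add {E F : Type*} [NormedAddCommGroup E] [ProperSpace E]
    [NormedAddCommGroup F] [ProperSpace F] {g : E → F} {A : Set E} {C : ℝ} (hA : IsClosed A)
    (hg : ContinuousOn g A) (hle : ∀ u ∈ A, ‖u‖ ≤ ‖g u‖ + C) : IsClosed (g '' A) := by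
  have hnorm : Tendsto (fun u : A => ‖(u : E)‖) (cocompact A) atTop :=
    tendsto_norm_cocompact_atTop.comp hA.isClosedEmbedding_subtypeVal.tendsto_cocompact
  have htop : Tendsto (fun u : A => ‖g u‖) (cocompact A) atTop :=
    tendsto_atTop_mono (fun u => by linarith [hle u u.2])
      (tendsto_atTop_add_const_right _ (-C) hnorm)
  have hproper : IsProperMap (A.domRestrict g) := by
    refine isProperMap_iff_tendsto_cocompact.2 ⟨hg.domRestrict, ?_⟩
    rw [← Metric.cobounded_eq_cocompact (α := F)]
    exact tendsto_norm_atTop_iff_cobounded.1 htop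
  exact range_domRestrict g A ▸ hproper.isClosedMap.isClosed_range

lemma isOpen_image_of_hasStrictDerivAt {𝕜 : Type*} [NontriviallyNormedField 𝕜] [CompleteSpace 𝕜]
    {g g' : 𝕜 → 𝕜} {S : Set 𝕜} (hS : IsOpen S) (hg : ∀ u ∈ S, HasStrictDerivAt g (g' u) u)
    (hg' : ∀ u ∈ S, g' u ≠ 0) : IsOpen (g '' S) := by
  rw [isOpen_iff_mem_nhds]
  rintro _ ⟨u, hu, rfl⟩
  rw [← (hg u hu).map_nhds_eq (hg' u hu)]
  exact image_mem_map (hS.mem_nhds hu)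

/- Noshiro–Warschawski. The derivative of `z ↦ (c * conj (b - a) * g z).re` in the direction `b - a`
is `‖b - a‖² * (c * g' z).re > 0`, whereas `g a = g b` forces it to vanish somewhere on `[a, b]`. -/
theorem injOn_of_re_mul_deriv_pos {g g' : ℂ → ℂ} {s : Set ℂ} (hs : Convex ℝ s)
    (hg : ∀ z ∈ s, HasDerivWithinAt g (g' z) s z) (c : ℂ) (hpos : ∀ z ∈ s, 0 < (c * g' z).re) :
    InjOn g s := by
  intro a ha b hb hab
  by_contra hne
  have hderiv (z : ℂ) (hz : z ∈ s) :=
    Complex.reCLM.hasFDerivAt.comp_hasFDerivWithinAt z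
      (((hg z hz).const_mul (c * (starRingEnd ℂ) (b - a))).hasFDerivWithinAt.restrictScalars ℝ)
  obtain ⟨z, hz, hmvt⟩ := domain_mvt hderiv hs ha hb
  have hzero : ((b - a) * (c * (starRingEnd ℂ) (b - a) * g' z)).re = 0 := by
    simpa [hab] using hmvt.symm
  have hnormSq : (b - a) * (c * (starRingEnd ℂ) (b - a) * g' z) =
      Complex.normSq (b - a) * (c * g' z) := by
    rw [← Complex.mul_conj]
    ring
  rw [hnormSq, Complex.re_ofReal_mul] at hzero
  exact (mul_pos (Complex.normSq_pos.2 (sub_ne_zero.2 (Ne.symm hne)))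
    (hpos z (hs.segment_subset ha hb hz))).ne' hzero

theorem mul_dist_le_dist_of_injOn {𝕜 : Type*} [RCLike 𝕜] {g g' : 𝕜 → 𝕜} {S H : Set 𝕜} {m : ℝ}
    (hS : IsOpen S) (hinj : InjOn g S) (hg : ∀ u ∈ S, HasStrictDerivAt g (g' u) u) (hm : 0 < m)
    (hg' : ∀ u ∈ S, g u ∈ H → m ≤ ‖g' u‖) (hH : Convex ℝ H) (hsub : H ⊆ g '' S)
    {u v : 𝕜} (hu : u ∈ S) (hv : v ∈ S) (hgu : g u ∈ H) (hgv : g v ∈ H) :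
    m * dist u v ≤ dist (g u) (g v) := by
  set φ := Function.invFunOn g S
  have hφ : ∀ x ∈ S, φ (g x) = x := fun x hx => hinj.leftInvOn_invFunOn hx
  have hderiv : ∀ w ∈ H, HasDerivWithinAt φ (g' (φ w))⁻¹ H w := by
    intro w hw
    obtain ⟨x, hx, rfl⟩ := hsub hw
    have hne : g' x ≠ 0 := norm_pos_iff.1 (hm.trans_le (hg' x hx hw))
    rw [hφ x hx]
    exact ((hg x hx).to_local_left_inverse hne
      (mem_of_superset (hS.mem_nhds hx) hφ)).hasDerivAt.hasDerivWithinAt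
  have hbound : ∀ w ∈ H, ‖(g' (φ w))⁻¹‖ ≤ m⁻¹ := by
    intro w hw
    obtain ⟨x, hx, rfl⟩ := hsub hw
    rw [hφ x hx, norm_inv]
    exact inv_anti₀ hm (hg' x hx hw)
  have hle := hH.norm_image_sub_le_of_norm_hasDerivWithin_le hderiv hbound hgv hgu
  rwa [hφ u hu, hφ v hv, ← dist_eq_norm, ← dist_eq_norm, le_inv_mul_iff₀ hm] at hle

/-! ### The model map on the strip `|Im u| < π` -/

/-- The map `g(u) = u - 1 + e^u`, to which Fatou's function is conjugate under the point reflection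
`u = (2k + 1)πi - z`. -/
noncomputable def model (u : ℂ) : ℂ := u - 1 + Complex.exp u

/-- The open horizontal strip `|Im u| < π`, on which `model` is injective. -/
def strip : Set ℂ := Complex.im ⁻¹' Ioo (-π) π

lemma model_re (u : ℂ) : (model u).re = u.re - 1 + Real.exp u.re * Real.cos u.im := by
  simp [model, Complex.exp_re]

lemma model_im (u : ℂ) : (model u).im = u.im + Real.exp u.re * Real.sin u.im := by
  simp [model, Complex.exp_im]

lemma continuous_model : Continuous model := by
  unfold model
  fun_prop

lemma hasStrictDerivAt_model (u : ℂ) : HasStrictDerivAt model (1 + Complex.exp u) u :=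
  ((hasStrictDerivAt_id u).sub_const 1).add (Complex.hasStrictDerivAt_exp u)

lemma isOpen_strip : IsOpen strip := isOpen_Ioo.preimage Complex.continuous_im

lemma closure_strip : closure strip = Complex.im ⁻¹' Icc (-π) π := by
  rw [strip, Complex.closure_preimage_im, closure_Ioo (by linarith [Real.pi_pos])]

lemma frontier_strip : frontier strip = Complex.im ⁻¹' {-π, π} := by
  rw [strip, Complex.frontier_preimage_im, frontier_Ioo (by linarith [Real.pi_pos])]

lemma one_add_exp_ne_zero {u : ℂ} (hu : u ∈ strip) : 1 + Complex.exp u ≠ 0 := by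
  intro h
  have hlog : u = π * Complex.I := by
    rw [← Complex.log_neg_one, ← eq_neg_of_add_eq_zero_right h, Complex.log_exp hu.1 hu.2.le]
  exact hu.2.ne (by simp [hlog])

lemma injOn_model_of_convex {J : Set ℝ} (hJ : Convex ℝ J) (c : ℂ)
    (hpos : ∀ u : ℂ, u.im ∈ J → 0 < (c * (1 + Complex.exp u)).re) :
    InjOn model (Complex.im ⁻¹' J) :=
  injOn_of_re_mul_deriv_pos (hJ.linear_preimage Complex.imLm)
    (fun u _ => (hasStrictDerivAt_model u).hasDerivAt.hasDerivWithinAt) c hpos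

lemma injOn_model_upper : InjOn model (Complex.im ⁻¹' Ioo 0 π) := by
  refine injOn_model_of_convex (convex_Ioo 0 π) (-Complex.I) fun u hu => ?_
  simpa [Complex.exp_im] using
    mul_pos (Real.exp_pos u.re) (Real.sin_pos_of_pos_of_lt_pi hu.1 hu.2)

lemma injOn_model_lower : InjOn model (Complex.im ⁻¹' Ioo (-π) 0) := by
  refine injOn_model_of_convex (convex_Ioo (-π) 0) Complex.I fun u hu => ?_
  simpa [Complex.exp_im] using
    mul_neg_of_pos_of_neg (Real.exp_pos u.re) (Real.sin_neg_of_neg_of_neg_pi_lt hu.2 hu.1)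

lemma injOn_model_real : InjOn model (Complex.im ⁻¹' {0}) := by
  refine injOn_model_of_convex (convex_singleton 0) 1 fun u hu => ?_
  have him : u.im = 0 := hu
  simp only [one_mul, Complex.add_re, Complex.one_re, Complex.exp_re, him, Real.cos_zero, mul_one]
  positivity

lemma sign_model_im {u : ℂ} (hu : u ∈ strip) : SignType.sign (model u).im = SignType.sign u.im := by
  rw [model_im]
  rcases lt_trichotomy u.im 0 with him | him | him
  · have := mul_neg_of_pos_of_neg (Real.exp_pos u.re) (Real.sin_neg_of_neg_of_neg_pi_lt him hu.1)
    rw [sign_neg him, sign_neg (add_neg him this)]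
  · simp [him]
  · have := mul_pos (Real.exp_pos u.re) (Real.sin_pos_of_pos_of_lt_pi him hu.2)
    rw [sign_pos him, sign_pos (add_pos him this)]

theorem injOn_model_strip : InjOn model strip := by
  intro u hu v hv huv
  have hsign : SignType.sign v.im = SignType.sign u.im := by
    rw [← sign_model_im hu, ← sign_model_im hv, huv]
  rcases lt_trichotomy u.im 0 with him | him | him
  · rw [sign_neg him, sign_eq_neg_one_iff] at hsign
    exact injOn_model_lower ⟨hu.1, him⟩ ⟨hv.1, hsign⟩ huv
  · rw [him, sign_zero, sign_eq_zero_iff] at hsign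
    exact injOn_model_real him hsign huv
  · rw [sign_pos him, sign_eq_one_iff] at hsign
    exact injOn_model_upper ⟨him, hu.2⟩ ⟨hsign, hv.2⟩ huv

lemma norm_le_norm_model_add {u : ℂ} (hu : u ∈ closure strip) : ‖u‖ ≤ ‖model u‖ + 9 := by
  rw [closure_strip] at hu
  rcases le_total u.re 0 with hre | hre
  · have hexp : ‖Complex.exp u‖ ≤ 1 := by simpa [Complex.norm_exp] using hre
    calc ‖u‖ = ‖model u + 1 - Complex.exp u‖ := by rw [model]; ring_nf
      _ ≤ ‖model u‖ + ‖(1 : ℂ)‖ + ‖Complex.exp u‖ :=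
        (norm_sub_le _ _).trans (by gcongr; exact norm_add_le _ _)
      _ ≤ ‖model u‖ + 9 := by rw [norm_one]; linarith
  · have hu_le : ‖u‖ ≤ u.re + 4 := by
      have him : |u.im| ≤ π := abs_le.2 hu
      have := Complex.norm_le_abs_re_add_abs_im u
      rw [abs_of_nonneg hre] at this
      linarith [Real.pi_lt_four]
    have hexp : Real.exp u.re ≤ ‖model u‖ + ‖u‖ + 1 :=
      calc Real.exp u.re = ‖model u - u + 1‖ := by rw [← Complex.norm_exp, model]; ring_nf
        _ ≤ ‖model u‖ + ‖u‖ + ‖(1 : ℂ)‖ :=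
          (norm_add_le _ _).trans (by gcongr; exact norm_sub_le _ _)
        _ = ‖model u‖ + ‖u‖ + 1 := by rw [norm_one]
    linarith [Real.two_mul_le_exp (x := u.re)]

lemma model_re_neg_of_mem_frontier {u : ℂ} (hu : u ∈ frontier strip) : (model u).re < 0 := by
  rw [frontier_strip, mem_preimage, mem_insert_iff, mem_singleton_iff] at hu
  have hcos : Real.cos u.im = -1 := by
    rcases hu with h | h <;> simp [h]
  rw [model_re, hcos]
  linarith [Real.add_one_le_exp u.re]

theorem halfPlane_subset_image_model : {w : ℂ | 0 ≤ w.re} ⊆ model '' strip := by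
  refine subset_image_of_isPreconnected (convex_halfSpace_re_ge 0).isPreconnected
    (isOpen_image_of_hasStrictDerivAt isOpen_strip (fun u _ => hasStrictDerivAt_model u)
      fun u => one_add_exp_ne_zero)
    (isClosed_image_of_norm_le_norm_add isClosed_closure continuous_model.continuousOn
      fun u => norm_le_norm_model_add) ?_
    ⟨0, by simp, 0, by simp [strip, Real.pi_pos], by simp [model]⟩
  rw [Set.disjoint_left]
  rintro _ ⟨u, hu, rfl⟩ hre
  exact (model_re_neg_of_mem_frontier hu).not_ge hre

lemma two_le_norm_one_add_exp {u : ℂ} (hu : 0 ≤ (model u).re) : 2 ≤ ‖1 + Complex.exp u‖ := by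
  rw [model_re] at hu
  have hsq : ‖1 + Complex.exp u‖ ^ 2 =
      1 + 2 * (Real.exp u.re * Real.cos u.im) + Real.exp (2 * u.re) := by
    rw [← Complex.normSq_eq_norm_sq, Complex.normSq_apply]
    simp only [Complex.add_re, Complex.add_im, Complex.one_re, Complex.one_im,
      Complex.exp_re, Complex.exp_im]
    rw [two_mul u.re, Real.exp_add]
    linear_combination Real.exp u.re ^ 2 * Real.sin_sq_add_cos_sq u.im
  refine le_of_sq_le_sq ?_ (norm_nonneg _)
  linarith [Real.add_one_le_exp (2 * u.re)]

theorem two_mul_dist_le_dist_model {u v : ℂ} (hu : u ∈ strip) (hv : v ∈ strip)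
    (hgu : 0 ≤ (model u).re) (hgv : 0 ≤ (model v).re) :
    2 * dist u v ≤ dist (model u) (model v) :=
  mul_dist_le_dist_of_injOn (H := {w : ℂ | 0 ≤ w.re}) isOpen_strip injOn_model_strip
    (fun u _ => hasStrictDerivAt_model u) two_pos (fun _ _ => two_le_norm_one_add_exp)
    (convex_halfSpace_re_ge 0) halfPlane_subset_image_model hu hv hgu hgv

/-! ### Fatou's function -/

/-- Fatou's function `f(z) = z + 1 + e^{-z}`. -/
noncomputable def fatou (z : ℂ) : ℂ := z + 1 + Complex.exp (-z)

/-- The centre `(2k + 1)πi` of the strip `2πk < Im z < 2π(k + 1)`. -/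
noncomputable def stripCenter (k : ℤ) : ℂ := ((2 * k + 1) * π : ℝ) * Complex.I

lemma fatou_re (z : ℂ) : (fatou z).re = z.re + 1 + Real.exp (-z.re) * Real.cos z.im := by
  simp [fatou, Complex.exp_re]

lemma continuous_fatou : Continuous fatou := by
  unfold fatou
  fun_prop

@[simp]
lemma stripCenter_re (k : ℤ) : (stripCenter k).re = 0 := by simp [stripCenter]

@[simp]
lemma stripCenter_im (k : ℤ) : (stripCenter k).im = (2 * k + 1) * π := by simp [stripCenter]

lemma exp_stripCenter (k : ℤ) : Complex.exp (stripCenter k) = -1 := by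
  have : stripCenter k = k * (2 * π * Complex.I) + π * Complex.I := by
    rw [stripCenter]
    push_cast
    ring
  rw [this, Complex.exp_add, Complex.exp_int_mul_two_pi_mul_I, Complex.exp_pi_mul_I, one_mul]

lemma model_stripCenter_sub (k : ℤ) (z : ℂ) :
    model (stripCenter k - z) = stripCenter k - fatou z := by
  rw [model, fatou, sub_eq_add_neg _ z, Complex.exp_add, exp_stripCenter]
  ring

lemma stripCenter_sub_mem_strip {z : ℂ} {k : ℤ} (hk : z.im / (2 * π) ∈ Ioo (k : ℝ) (k + 1)) :
    stripCenter k - z ∈ strip := by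
  obtain ⟨hl, hr⟩ := hk
  rw [lt_div_iff₀ Real.two_pi_pos] at hl
  rw [div_lt_iff₀ Real.two_pi_pos] at hr
  constructor <;> rw [Complex.sub_im, stripCenter_im] <;> linarith

theorem two_mul_dist_le_dist_fatou {z w : ℂ} {k : ℤ}
    (hz : z.im / (2 * π) ∈ Ioo (k : ℝ) (k + 1)) (hw : w.im / (2 * π) ∈ Ioo (k : ℝ) (k + 1))
    (hfz : (fatou z).re ≤ 0) (hfw : (fatou w).re ≤ 0) :
    2 * dist z w ≤ dist (fatou z) (fatou w) := by
  have h := two_mul_dist_le_dist_model (stripCenter_sub_mem_strip hz) (stripCenter_sub_mem_strip hw)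
    (by simpa [model_stripCenter_sub] using hfz) (by simpa [model_stripCenter_sub] using hfw)
  simpa only [model_stripCenter_sub, dist_sub_left] using h

lemma mem_boundedOrbitSet {f : ℂ → ℂ} {z : ℂ} :
    z ∈ boundedOrbitSet f ↔ IsBounded (range fun n : ℕ => f^[n] z) := Iff.rfl

lemma mapsTo_boundedOrbitSet (f : ℂ → ℂ) : MapsTo f (boundedOrbitSet f) (boundedOrbitSet f) := by
  intro z hz
  refine (mem_boundedOrbitSet.1 hz).subset ?_
  rintro _ ⟨n, rfl⟩
  exact ⟨n + 1, rfl⟩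

lemma add_le_fatou_re {a : ℝ} {z : ℂ} (hz : a ≤ z.re) :
    z.re + (1 - Real.exp (-a)) ≤ (fatou z).re := by
  have hexp : Real.exp (-z.re) ≤ Real.exp (-a) := Real.exp_le_exp.2 (neg_le_neg hz)
  rw [fatou_re]
  nlinarith [Real.neg_one_le_cos z.im, Real.exp_pos (-z.re)]

lemma add_mul_le_iterate_fatou_re {z : ℂ} (hz : 0 ≤ z.re) (n : ℕ) :
    z.re + n * (1 - Real.exp (-z.re)) ≤ (fatou^[n] z).re := by
  have hδ : 0 ≤ 1 - Real.exp (-z.re) := by simpa using hz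
  induction n with
  | zero => simp
  | succ n ih =>
    have hle : z.re ≤ (fatou^[n] z).re := (le_add_of_nonneg_right (by positivity)).trans ih
    rw [Function.iterate_succ_apply']
    push_cast
    linarith [add_le_fatou_re hle]

lemma re_nonpos_of_mem_boundedOrbitSet {z : ℂ} (hz : z ∈ boundedOrbitSet fatou) : z.re ≤ 0 := by
  by_contra! hpos
  have hδ : 0 < 1 - Real.exp (-z.re) := by simpa using hpos
  obtain ⟨M, hM⟩ := (mem_boundedOrbitSet.1 hz).exists_norm_le
  obtain ⟨n, hn⟩ := exists_nat_gt (M / (1 - Real.exp (-z.re)))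
  rw [div_lt_iff₀ hδ] at hn
  have hle : (fatou^[n] z).re ≤ M := (Complex.re_le_norm _).trans (hM _ ⟨n, rfl⟩)
  linarith [add_mul_le_iterate_fatou_re hpos.le n]

lemma fatou_re_nonpos_of_mem_boundedOrbitSet {z : ℂ} (hz : z ∈ boundedOrbitSet fatou) :
    (fatou z).re ≤ 0 :=
  re_nonpos_of_mem_boundedOrbitSet (mapsTo_boundedOrbitSet fatou hz)

lemma im_div_two_pi_ne_intCast {z : ℂ} (hz : z ∈ boundedOrbitSet fatou) (k : ℤ) :
    z.im / (2 * π) ≠ k := by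
  intro hk
  have hcos : Real.cos z.im = 1 := by
    rw [(div_eq_iff Real.two_pi_pos.ne').1 hk, Real.cos_int_mul_two_pi]
  have hre := fatou_re_nonpos_of_mem_boundedOrbitSet hz
  rw [fatou_re, hcos] at hre
  linarith [Real.add_one_le_exp (-z.re)]

lemma im_div_two_pi_mem_Ioo_floor {z : ℂ} (hz : z ∈ boundedOrbitSet fatou) :
    z.im / (2 * π) ∈ Ioo (⌊z.im / (2 * π)⌋ : ℝ) (⌊z.im / (2 * π)⌋ + 1) :=
  ⟨(Int.floor_le _).lt_of_ne (im_div_two_pi_ne_intCast hz _).symm, Int.lt_floor_add_one _⟩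

lemma floor_im_eq_floor_im_of_isPreconnected {t : Set ℂ} (htK : t ⊆ boundedOrbitSet fatou)
    (ht : IsPreconnected t) {z w : ℂ} (hz : z ∈ t) (hw : w ∈ t) :
    ⌊z.im / (2 * π)⌋ = ⌊w.im / (2 * π)⌋ := by
  refine floor_eq_floor_of_isPreconnected
    (ht.image (fun z => z.im / (2 * π)) (by fun_prop)) ?_
    (mem_image_of_mem _ hz) (mem_image_of_mem _ hw)
  rintro k ⟨x, hx, hk⟩
  exact im_div_two_pi_ne_intCast (htK hx) k hk

theorem two_mul_dist_le_dist_fatou_of_isPreconnected {t : Set ℂ}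
    (htK : t ⊆ boundedOrbitSet fatou) (ht : IsPreconnected t) {z w : ℂ} (hz : z ∈ t) (hw : w ∈ t) :
    2 * dist z w ≤ dist (fatou z) (fatou w) :=
  two_mul_dist_le_dist_fatou (im_div_two_pi_mem_Ioo_floor (htK hz))
    (floor_im_eq_floor_im_of_isPreconnected htK ht hz hw ▸ im_div_two_pi_mem_Ioo_floor (htK hw))
    (fatou_re_nonpos_of_mem_boundedOrbitSet (htK hz))
    (fatou_re_nonpos_of_mem_boundedOrbitSet (htK hw))

end FatouFunction

/-- For Fatou's function `f(z) = z + 1 + e^{-z}`, the set `K(f)` is totally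
disconnected. -/
theorem Kf_totally_disconnected_fatou_function (f : ℂ → ℂ)
    (hf : ∀ z : ℂ, f z = z + 1 + Complex.exp (-z)) :
    IsTotallyDisconnected (boundedOrbitSet f) := by
  obtain rfl : f = FatouFunction.fatou := funext hf
  exact FatouFunction.isTotallyDisconnected_of_expanding one_lt_two
    FatouFunction.continuous_fatou.continuousOn (FatouFunction.mapsTo_boundedOrbitSet _)
    (fun _ => FatouFunction.mem_boundedOrbitSet.1) fun _ htK ht _ hz _ hw =>
      FatouFunction.two_mul_dist_le_dist_fatou_of_isPreconnected htK ht hz hw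
end
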